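/- arXiv:1004.2484 — 6 statements merged into one kernel-verified Lean document; each statement's English description precedes it below -/
import Mathlib

section
/- Call r ∈ R_Φ(P_T) a boundary point of R_Φ(P_T) if (1+δ)·r ∉ R_Φ(P_T) for every δ > 0. Then every boundary point of R_Φ(P_T) is a strong Pareto optimum: there is no r' ∈ R_Φ(P_T) with r'_l ≥ r_l for all l ∈ {1,…,L} and r'_k > r_k for some k. -/
open Matrix ComplexOrder

noncomputable section

/-- Forward interference-plus-noise covariance of link `l` in a B-MAC network. -/
def bmacOmega {L : ℕ} (m n : Fin L → ℕ)
    (H : ∀ l k : Fin L, Matrix (Fin (n l)) (Fin (m k)) ℂ)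
    (Φ : Fin L → Fin L → ℝ)
    (S : ∀ k : Fin L, Matrix (Fin (m k)) (Fin (m k)) ℂ) (l : Fin L) :
    Matrix (Fin (n l)) (Fin (n l)) ℂ :=
  1 + ∑ k : Fin L, Φ l k • (H l k * S k * (H l k)ᴴ)

/-- Forward rate of link `l`. -/
def bmacRate {L : ℕ} (m n : Fin L → ℕ)
    (H : ∀ l k : Fin L, Matrix (Fin (n l)) (Fin (m k)) ℂ)
    (Φ : Fin L → Fin L → ℝ)
    (S : ∀ k : Fin L, Matrix (Fin (m k)) (Fin (m k)) ℂ) (l : Fin L) : ℝ :=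
  Real.log ((bmacOmega m n H Φ S l + H l l * S l * (H l l)ᴴ).det.re)
    - Real.log ((bmacOmega m n H Φ S l).det.re)

/-- Achievable rate region under a sum power constraint. -/
def bmacRegion {L : ℕ} (m n : Fin L → ℕ)
    (H : ∀ l k : Fin L, Matrix (Fin (n l)) (Fin (m k)) ℂ)
    (Φ : Fin L → Fin L → ℝ) (PT : ℝ) : Set (Fin L → ℝ) :=
  {r | (∀ l, 0 ≤ r l) ∧
    ∃ S : ∀ k : Fin L, Matrix (Fin (m k)) (Fin (m k)) ℂ,
      (∀ k, (S k).PosSemidef) ∧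
      (∑ l, (Matrix.trace (S l)).re) ≤ PT ∧
      ∀ l, r l ≤ bmacRate m n H Φ S l}

/-!
If `S` achieves `r'` with `r ≤ r'` and `r k < r' k`, lowering the power of link `k` slightly keeps
every requirement `r l` satisfied, by continuity on link `k` and because less interference never
hurts the other links; so `r` is achieved with total power `P < PT`. Spend the spare power by
scaling all covariances by some `t > 1`. Since log-determinant rates are homogeneous and
`t • Ω(S) = Ω(t • S) + (t - 1) • 1`, the scaled network has the rates of the original one except
that the noise `(t - 1) • 1` is removed, so every positive rate strictly increases and a proper
multiple of `r` is achievable.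

The effect of noise on a signal `X = Cᴴ * C` is read off from the identity
`det (A + X) = det A * det (1 + C * A⁻¹ * Cᴴ)`.
-/

theorem one_add_sum_le_prod_one_add {ι R : Type*} [CommSemiring R] [PartialOrder R]
    [IsOrderedRing R] (s : Finset ι) {f : ι → R} (hf : ∀ i ∈ s, 0 ≤ f i) :
    1 + ∑ i ∈ s, f i ≤ ∏ i ∈ s, (1 + f i) := by
  induction s using Finset.cons_induction with
  | empty => simp
  | cons a s ha ih =>
    rw [Finset.forall_mem_cons] at hf
    rw [Finset.sum_cons, Finset.prod_cons]
    calc 1 + (f a + ∑ i ∈ s, f i)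
        ≤ 1 + (f a + ∑ i ∈ s, f i) + f a * ∑ i ∈ s, f i :=
          le_add_of_nonneg_right (mul_nonneg hf.1 (Finset.sum_nonneg hf.2))
      _ = (1 + f a) * (1 + ∑ i ∈ s, f i) := by ring
      _ ≤ (1 + f a) * ∏ i ∈ s, (1 + f i) :=
          mul_le_mul_of_nonneg_left (ih hf.2) (add_nonneg zero_le_one hf.1)

theorem exists_one_add_smul_le {ι : Type*} [Finite ι] {r s : ι → ℝ} (hs : 0 ≤ s)
    (hrs : ∀ i, 0 < r i → r i < s i) : ∃ δ : ℝ, 0 < δ ∧ (1 + δ) • r ≤ s := by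
  have hev : ∀ᶠ δ : ℝ in nhds 0, ∀ i, 0 < r i → (1 + δ) * r i < s i := by
    refine Filter.eventually_all.2 fun i ↦ Filter.eventually_imp_distrib_left.2 fun hi ↦ ?_
    have hcont : Continuous fun δ : ℝ ↦ (1 + δ) * r i := by fun_prop
    exact (hcont.tendsto 0).eventually_lt_const (by simpa using hrs i hi)
  obtain ⟨δ, hδ, h⟩ := hev.exists_gt
  refine ⟨δ, hδ, fun i ↦ ?_⟩
  rcases le_or_gt (r i) 0 with hi | hi
  · exact (mul_nonpos_of_nonneg_of_nonpos (by linarith) hi).trans (hs i)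
  · exact (h i hi).le

section PosSemidefFamily

variable {𝕜 ι κ : Type*} [RCLike 𝕜] {m : κ → Type*} {S : ∀ k, Matrix (m k) (m k) 𝕜}

theorem posSemidef_update_smul [DecidableEq κ] (hS : ∀ k, (S k).PosSemidef) (k : κ) {a : ℝ}
    (ha : 0 ≤ a) (j : κ) : (Function.update S k (a • S k) j).PosSemidef :=
  (Function.forall_update_iff S fun _ M ↦ M.PosSemidef).2 ⟨(hS k).smul ha, fun j _ ↦ hS j⟩ j

variable [∀ k, Fintype (m k)]

theorem posSemidef_sum_smul_mul_mul_conjTranspose [Fintype κ] [Finite ι]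
    {c : κ → ℝ} (hc : ∀ k, 0 ≤ c k) (hS : ∀ k, (S k).PosSemidef) (B : ∀ k, Matrix ι (m k) 𝕜) :
    (∑ k, c k • (B k * S k * (B k)ᴴ)).PosSemidef :=
  posSemidef_sum _ fun k _ ↦ ((hS k).mul_mul_conjTranspose_same (B k)).smul (hc k)

theorem sum_re_trace_update_smul_lt [Fintype κ] [DecidableEq κ] (hS : ∀ k, (S k).PosSemidef)
    {k : κ} (hk : S k ≠ 0) {a : ℝ} (ha : a < 1) :
    ∑ j, RCLike.re (Function.update S k (a • S k) j).trace < ∑ j, RCLike.re (S j).trace := by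
  have htr : 0 < RCLike.re (S k).trace := (RCLike.pos_iff.1
    ((hS k).trace_nonneg.lt_of_ne' ((hS k).trace_eq_zero_iff.not.2 hk))).1
  have hlt : RCLike.re (Function.update S k (a • S k) k).trace < RCLike.re (S k).trace := by
    rw [Function.update_self, trace_smul, RCLike.smul_re]
    exact mul_lt_of_lt_one_left htr ha
  refine Finset.sum_lt_sum (fun j _ ↦ ?_) ⟨k, Finset.mem_univ k, hlt⟩
  rcases eq_or_ne j k with rfl | hj
  · exact hlt.le
  · rw [Function.update_of_ne hj]

end PosSemidefFamily

section LogDet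

variable {𝕜 ι κ : Type*} [RCLike 𝕜]

theorem posDef_one_add_mul_mul_conjTranspose [Finite ι] [DecidableEq ι] [Fintype κ]
    {P : Matrix κ κ 𝕜} (hP : P.PosSemidef) (C : Matrix ι κ 𝕜) : (1 + C * P * Cᴴ).PosDef :=
  PosDef.one.add_posSemidef (hP.mul_mul_conjTranspose_same C)

variable [Fintype ι] {A D X : Matrix ι ι 𝕜}

theorem exists_eq_conjTranspose_mul_self (hA : A.PosSemidef) :
    ∃ C : Matrix ι ι 𝕜, A = Cᴴ * C := by
  classical
  open scoped MatrixOrder in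
  exact CStarAlgebra.nonneg_iff_eq_star_mul_self.1 hA.nonneg

theorem mul_posDef_mul_conjTranspose_ne_zero (hA : A.PosDef) {C : Matrix κ ι 𝕜} (hC : C ≠ 0) :
    C * A * Cᴴ ≠ 0 := by
  classical
  intro h
  obtain ⟨Q, hQ⟩ := exists_eq_conjTranspose_mul_self hA.posSemidef
  have hQC : Q * Cᴴ = 0 := by
    rw [← conjTranspose_mul_self_eq_zero, ← h, hQ]
    simp [Matrix.mul_assoc]
  have hAC : A * Cᴴ = 0 := by rw [hQ, Matrix.mul_assoc, hQC, Matrix.mul_zero]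
  have hinv := nonsing_inv_mul_cancel_left A Cᴴ ((isUnit_iff_isUnit_det A).1 hA.isUnit)
  rw [hAC, Matrix.mul_zero] at hinv
  exact hC (conjTranspose_eq_zero.1 hinv.symm)

variable [DecidableEq ι]

theorem det_one_add_eq_prod_eigenvalues (hA : A.IsHermitian) :
    (1 + A).det = ∏ i, (1 + (hA.eigenvalues i : 𝕜)) := by
  have h := congrArg (Polynomial.eval (-1)) hA.charpoly_eq
  have hneg : scalar ι (-1 : 𝕜) - A = -(1 + A) := by
    rw [map_neg, map_one, neg_add']
  have hprod : ∏ i, (-1 - (hA.eigenvalues i : 𝕜)) =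
      (-1) ^ Fintype.card ι * ∏ i, (1 + (hA.eigenvalues i : 𝕜)) := by
    simp only [← neg_add', Finset.prod_neg, Finset.card_univ]
  simp only [eval_charpoly, hneg, det_neg, Polynomial.eval_prod, Polynomial.eval_sub,
    Polynomial.eval_X, Polynomial.eval_C, hprod] at h
  exact mul_left_cancel₀ (pow_ne_zero _ (neg_ne_zero.2 one_ne_zero)) h

theorem one_add_trace_le_det_one_add (hA : A.PosSemidef) : 1 + A.trace ≤ (1 + A).det := by
  rw [hA.1.trace_eq_sum_eigenvalues, det_one_add_eq_prod_eigenvalues hA.1]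
  exact one_add_sum_le_prod_one_add _ fun i _ ↦ RCLike.ofReal_nonneg.2 (hA.eigenvalues_nonneg i)

theorem one_lt_det_one_add (hA : A.PosSemidef) (hA0 : A ≠ 0) : 1 < (1 + A).det := by
  have htr : 0 < A.trace := hA.trace_nonneg.lt_of_ne' (hA.trace_eq_zero_iff.not.2 hA0)
  exact (lt_add_of_pos_right 1 htr).trans_le (one_add_trace_le_det_one_add hA)

theorem det_lt_det_add (hA : A.PosDef) (hX : X.PosSemidef) (hX0 : X ≠ 0) :
    A.det < (A + X).det := by
  obtain ⟨C, rfl⟩ := exists_eq_conjTranspose_mul_self hX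
  have hC : C ≠ 0 := by rintro rfl; simp at hX0
  rw [det_add_mul _ _ hA.det_pos.ne'.isUnit]
  exact lt_mul_of_one_lt_right hA.det_pos (one_lt_det_one_add
    (hA.inv.posSemidef.mul_mul_conjTranspose_same C)
    (mul_posDef_mul_conjTranspose_ne_zero hA.inv hC))

theorem det_le_det_add (hA : A.PosDef) (hX : X.PosSemidef) : A.det ≤ (A + X).det := by
  obtain rfl | hX0 := eq_or_ne X 0
  · rw [add_zero]
  · exact (det_lt_det_add hA hX hX0).le

theorem re_det_pos (hA : A.PosDef) : 0 < RCLike.re A.det :=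
  (RCLike.pos_iff.1 hA.det_pos).1

theorem det_one_add_mul_mul_conjTranspose_le [Fintype κ] {P Q : Matrix κ κ 𝕜}
    (hP : P.PosSemidef) (hPQ : (Q - P).PosSemidef) (C : Matrix ι κ 𝕜) :
    (1 + C * P * Cᴴ).det ≤ (1 + C * Q * Cᴴ).det := by
  simpa only [add_assoc, ← Matrix.add_mul, ← Matrix.mul_add, add_sub_cancel] using
    det_le_det_add (posDef_one_add_mul_mul_conjTranspose hP C) (hPQ.mul_mul_conjTranspose_same C)

theorem det_one_add_mul_mul_conjTranspose_lt [Fintype κ] {P Q : Matrix κ κ 𝕜}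
    (hP : P.PosSemidef) (hPQ : (Q - P).PosDef) {C : Matrix ι κ 𝕜} (hC : C ≠ 0) :
    (1 + C * P * Cᴴ).det < (1 + C * Q * Cᴴ).det := by
  simpa only [add_assoc, ← Matrix.add_mul, ← Matrix.mul_add, add_sub_cancel] using
    det_lt_det_add (posDef_one_add_mul_mul_conjTranspose hP C)
      (hPQ.posSemidef.mul_mul_conjTranspose_same C) (mul_posDef_mul_conjTranspose_ne_zero hPQ hC)

theorem inv_sub_inv_add (hA : A.PosDef) (hD : D.PosSemidef) :
    A⁻¹ - (A + D)⁻¹ = (A + D)⁻¹ * (D + D * A⁻¹ * D) * ((A + D)⁻¹)ᴴ := by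
  have hAD := hA.add_posSemidef hD
  have huA : IsUnit A.det := hA.det_pos.ne'.isUnit
  have huAD : IsUnit (A + D).det := hAD.det_pos.ne'.isUnit
  have hmid : D + D * A⁻¹ * D = (A + D) * (A⁻¹ * D) := by
    rw [Matrix.add_mul, mul_nonsing_inv_cancel_left _ _ huA, Matrix.mul_assoc]
  rw [hAD.isHermitian.inv.eq, hmid, nonsing_inv_mul_cancel_left _ _ huAD,
    inv_sub_inv (iff_of_true hA.isUnit hAD.isUnit), add_sub_cancel_left]

theorem posSemidef_inv_sub_inv_add (hA : A.PosDef) (hD : D.PosSemidef) :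
    (A⁻¹ - (A + D)⁻¹).PosSemidef := by
  have hDAD : (D * A⁻¹ * D).PosSemidef := by
    simpa only [hD.isHermitian.eq] using hA.inv.posSemidef.mul_mul_conjTranspose_same D
  rw [inv_sub_inv_add hA hD]
  exact (hD.add hDAD).mul_mul_conjTranspose_same _

theorem posDef_inv_sub_inv_add (hA : A.PosDef) (hD : D.PosDef) :
    (A⁻¹ - (A + D)⁻¹).PosDef := by
  refine (posSemidef_inv_sub_inv_add hA hD.posSemidef).posDef_iff_isUnit.2 ?_
  rw [inv_sub_inv (iff_of_true hA.isUnit (hA.add hD).isUnit), add_sub_cancel_left]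
  exact (hA.inv.isUnit.mul hD.isUnit).mul (hA.add hD).inv.isUnit

/-- The rate `log det (A + X) - log det A` of a signal with covariance `X` received in noise with
covariance `A`. The determinants of positive definite matrices are positive reals, and passing to
real parts makes the difference of logarithms a real number. -/
def logDetGain (A X : Matrix ι ι 𝕜) : ℝ :=
  Real.log (RCLike.re (A + X).det) - Real.log (RCLike.re A.det)

@[simp]
theorem logDetGain_zero_right (A : Matrix ι ι 𝕜) : logDetGain A 0 = 0 := by
  simp [logDetGain]

theorem logDetGain_nonneg (hA : A.PosDef) (hX : X.PosSemidef) : 0 ≤ logDetGain A X :=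
  sub_nonneg.2 (Real.log_le_log (re_det_pos hA) (RCLike.re_monotone (det_le_det_add hA hX)))

theorem re_det_smul (t : ℝ) (A : Matrix ι ι 𝕜) :
    RCLike.re (t • A).det = t ^ Fintype.card ι * RCLike.re A.det := by
  rw [← algebraMap_smul 𝕜 t A, det_smul, RCLike.algebraMap_eq_ofReal, ← RCLike.ofReal_pow,
    RCLike.re_ofReal_mul]

theorem logDetGain_smul_smul (hA : A.PosDef) (hX : X.PosSemidef) {t : ℝ} (ht : 0 < t) :
    logDetGain (t • A) (t • X) = logDetGain A X := by
  have htn : t ^ Fintype.card ι ≠ 0 := (pow_pos ht _).ne'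
  rw [logDetGain, ← smul_add, re_det_smul, re_det_smul, Real.log_mul htn (re_det_pos hA).ne',
    Real.log_mul htn (re_det_pos (hA.add_posSemidef hX)).ne', add_sub_add_left_eq_sub, logDetGain]

theorem logDetGain_conjTranspose_mul_self [Fintype κ] [DecidableEq κ] (hA : A.PosDef)
    (C : Matrix κ ι 𝕜) :
    logDetGain A (Cᴴ * C) = Real.log (RCLike.re (1 + C * A⁻¹ * Cᴴ).det) := by
  have hpos := posDef_one_add_mul_mul_conjTranspose hA.inv.posSemidef C
  rw [logDetGain, det_add_mul _ _ hA.det_pos.ne'.isUnit, RCLike.mul_re,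
    (RCLike.pos_iff.1 hA.det_pos).2, zero_mul, sub_zero,
    Real.log_mul (re_det_pos hA).ne' (re_det_pos hpos).ne', add_sub_cancel_left]

theorem logDetGain_add_left_le (hA : A.PosDef) (hD : D.PosSemidef) (hX : X.PosSemidef) :
    logDetGain (A + D) X ≤ logDetGain A X := by
  obtain ⟨C, rfl⟩ := exists_eq_conjTranspose_mul_self hX
  have hAD := hA.add_posSemidef hD
  rw [logDetGain_conjTranspose_mul_self hAD, logDetGain_conjTranspose_mul_self hA]
  exact Real.log_le_log (re_det_pos (posDef_one_add_mul_mul_conjTranspose hAD.inv.posSemidef C))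
    (RCLike.re_monotone (det_one_add_mul_mul_conjTranspose_le hAD.inv.posSemidef
      (posSemidef_inv_sub_inv_add hA hD) C))

theorem logDetGain_add_left_lt (hA : A.PosDef) (hD : D.PosDef) (hX : X.PosSemidef) (hX0 : X ≠ 0) :
    logDetGain (A + D) X < logDetGain A X := by
  obtain ⟨C, rfl⟩ := exists_eq_conjTranspose_mul_self hX
  have hC : C ≠ 0 := by rintro rfl; simp at hX0
  have hAD := hA.add hD
  rw [logDetGain_conjTranspose_mul_self hAD, logDetGain_conjTranspose_mul_self hA]
  exact Real.log_lt_log (re_det_pos (posDef_one_add_mul_mul_conjTranspose hAD.inv.posSemidef C))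
    (RCLike.lt_iff_re_im.1 (det_one_add_mul_mul_conjTranspose_lt hAD.inv.posSemidef
      (posDef_inv_sub_inv_add hA hD) hC)).1

end LogDet

section Bmac

variable {L : ℕ} {m n : Fin L → ℕ} {H : ∀ l k : Fin L, Matrix (Fin (n l)) (Fin (m k)) ℂ}
  {Φ : Fin L → Fin L → ℝ} {S T : ∀ k : Fin L, Matrix (Fin (m k)) (Fin (m k)) ℂ} {l : Fin L}
  {r r' : Fin L → ℝ} {P PT : ℝ}

theorem bmacRate_eq_logDetGain :
    bmacRate m n H Φ S l = logDetGain (bmacOmega m n H Φ S l) (H l l * S l * (H l l)ᴴ) :=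
  rfl

theorem posDef_bmacOmega (hΦ : ∀ k, 0 ≤ Φ l k) (hS : ∀ k, (S k).PosSemidef) :
    (bmacOmega m n H Φ S l).PosDef :=
  PosDef.one.add_posSemidef (posSemidef_sum_smul_mul_mul_conjTranspose hΦ hS (H l))

theorem bmacOmega_eq_add (S T : ∀ k : Fin L, Matrix (Fin (m k)) (Fin (m k)) ℂ) (l : Fin L) :
    bmacOmega m n H Φ S l =
      bmacOmega m n H Φ T l + ∑ k, Φ l k • (H l k * (S k - T k) * (H l k)ᴴ) := by
  simp only [bmacOmega, add_assoc, ← Finset.sum_add_distrib, ← smul_add, ← Matrix.add_mul,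
    ← Matrix.mul_add, add_sub_cancel]

theorem smul_bmacOmega (t : ℝ) (S : ∀ k : Fin L, Matrix (Fin (m k)) (Fin (m k)) ℂ) (l : Fin L) :
    t • bmacOmega m n H Φ S l = bmacOmega m n H Φ (t • S) l + (t - 1) • 1 := by
  simp only [bmacOmega, Pi.smul_apply, Matrix.mul_smul, Matrix.smul_mul, smul_comm _ t,
    ← Finset.smul_sum, smul_add, sub_smul, one_smul]
  abel

theorem bmacRate_nonneg (hΦ : ∀ k, 0 ≤ Φ l k) (hS : ∀ k, (S k).PosSemidef) :
    0 ≤ bmacRate m n H Φ S l :=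
  logDetGain_nonneg (posDef_bmacOmega hΦ hS) ((hS l).mul_mul_conjTranspose_same _)

theorem ne_zero_of_bmacRate_pos (h : 0 < bmacRate m n H Φ S l) : S l ≠ 0 := by
  intro hSl
  simp [bmacRate_eq_logDetGain, hSl] at h

theorem bmacRate_lt_bmacRate_smul (hΦ : ∀ k, 0 ≤ Φ l k) (hS : ∀ k, (S k).PosSemidef)
    (h : 0 < bmacRate m n H Φ S l) {t : ℝ} (ht : 1 < t) :
    bmacRate m n H Φ S l < bmacRate m n H Φ (t • S) l := by
  have ht0 : 0 < t := one_pos.trans ht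
  have hX : (H l l * S l * (H l l)ᴴ).PosSemidef := (hS l).mul_mul_conjTranspose_same _
  have hX0 : H l l * S l * (H l l)ᴴ ≠ 0 := by
    intro hX0
    simp [bmacRate_eq_logDetGain, hX0] at h
  have htX : H l l * (t • S) l * (H l l)ᴴ = t • (H l l * S l * (H l l)ᴴ) := by simp
  rw [bmacRate_eq_logDetGain, bmacRate_eq_logDetGain, htX,
    ← logDetGain_smul_smul (posDef_bmacOmega hΦ hS) hX ht0, smul_bmacOmega]
  exact logDetGain_add_left_lt (posDef_bmacOmega hΦ (fun k ↦ (hS k).smul ht0.le))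
    (PosDef.one.smul (sub_pos.2 ht)) (hX.smul ht0.le) (smul_ne_zero ht0.ne' hX0)

theorem bmacRate_le_of_posSemidef_sub (hΦ : ∀ k, 0 ≤ Φ l k) (hT : ∀ k, (T k).PosSemidef)
    (hST : ∀ k, (S k - T k).PosSemidef) (hl : S l = T l) :
    bmacRate m n H Φ S l ≤ bmacRate m n H Φ T l := by
  rw [bmacRate_eq_logDetGain, bmacRate_eq_logDetGain, hl, bmacOmega_eq_add S T]
  exact logDetGain_add_left_le (posDef_bmacOmega hΦ hT)
    (posSemidef_sum_smul_mul_mul_conjTranspose hΦ hST (H l))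
    ((hT l).mul_mul_conjTranspose_same _)

theorem continuousAt_bmacRate (hΦ : ∀ k, 0 ≤ Φ l k) (hS : ∀ k, (S k).PosSemidef) :
    ContinuousAt (fun T ↦ bmacRate m n H Φ T l) S := by
  have hΩ := posDef_bmacOmega (H := H) hΦ hS
  have hcont : Continuous fun T ↦ bmacOmega m n H Φ T l := by unfold bmacOmega; fun_prop
  refine ContinuousAt.sub (ContinuousAt.log ?_ ?_) (ContinuousAt.log ?_ (re_det_pos hΩ).ne')
  · exact (Complex.continuous_re.comp (Continuous.matrix_det (by fun_prop))).continuousAt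
  · exact (re_det_pos (hΩ.add_posSemidef ((hS l).mul_mul_conjTranspose_same _))).ne'
  · exact (Complex.continuous_re.comp hcont.matrix_det).continuousAt

theorem bmacRate_le_bmacRate_update_smul (hΦ : ∀ k, 0 ≤ Φ l k) (hS : ∀ k, (S k).PosSemidef)
    {k : Fin L} (hlk : l ≠ k) {a : ℝ} (ha0 : 0 ≤ a) (ha1 : a ≤ 1) :
    bmacRate m n H Φ S l ≤ bmacRate m n H Φ (Function.update S k (a • S k)) l := by
  refine bmacRate_le_of_posSemidef_sub hΦ (posSemidef_update_smul hS k ha0) (fun j ↦ ?_)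
    (Function.update_of_ne hlk _ _).symm
  rcases eq_or_ne j k with rfl | hj
  · simpa only [Function.update_self, sub_smul, one_smul] using (hS j).smul (sub_nonneg.2 ha1)
  · rw [Function.update_of_ne hj, sub_self]
    exact PosSemidef.zero

theorem exists_lt_bmacRate_update_smul {k : Fin L} (hΦ : ∀ j, 0 ≤ Φ k j)
    (hS : ∀ j, (S j).PosSemidef) {c : ℝ} (hc : c < bmacRate m n H Φ S k) :
    ∃ a ∈ Set.Ioo (0 : ℝ) 1, c < bmacRate m n H Φ (Function.update S k (a • S k)) k := by
  have hlim : Filter.Tendsto (fun a : ℝ ↦ Function.update S k (a • S k)) (nhds 1) (nhds S) := by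
    have hcont : Continuous fun a : ℝ ↦ Function.update S k (a • S k) := by fun_prop
    simpa using hcont.tendsto 1
  have hev := ((continuousAt_bmacRate (H := H) hΦ hS).tendsto.comp hlim).eventually_const_lt hc
  obtain ⟨a, ha1, ha0, hca⟩ := ((eventually_gt_nhds zero_lt_one).and hev).exists_lt
  exact ⟨a, ⟨ha0, ha1⟩, hca⟩

theorem exists_lt_mem_bmacRegion (hΦ : ∀ l k, 0 ≤ Φ l k) (hr : 0 ≤ r) (hrr' : r < r')
    (hr' : r' ∈ bmacRegion m n H Φ PT) : ∃ P < PT, r ∈ bmacRegion m n H Φ P := by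
  obtain ⟨hle, k, hk⟩ := Pi.lt_def.1 hrr'
  obtain ⟨-, S, hS, htr, hrate⟩ := hr'
  have hk' : r k < bmacRate m n H Φ S k := hk.trans_le (hrate k)
  have hSk : S k ≠ 0 := ne_zero_of_bmacRate_pos ((hr k).trans_lt hk')
  obtain ⟨a, ⟨ha0, ha1⟩, hak⟩ := exists_lt_bmacRate_update_smul (hΦ k) hS hk'
  refine ⟨_, (sum_re_trace_update_smul_lt hS hSk ha1).trans_le htr, hr, _,
    posSemidef_update_smul hS k ha0.le, le_rfl, fun l ↦ ?_⟩
  rcases eq_or_ne l k with rfl | hlk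
  · exact hak.le
  · exact ((hle l).trans (hrate l)).trans
      (bmacRate_le_bmacRate_update_smul (hΦ l) hS hlk ha0.le ha1.le)

theorem exists_one_add_smul_mem_bmacRegion (hΦ : ∀ l k, 0 ≤ Φ l k) (hP : P < PT)
    (hr : r ∈ bmacRegion m n H Φ P) : ∃ δ : ℝ, 0 < δ ∧ (1 + δ) • r ∈ bmacRegion m n H Φ PT := by
  obtain ⟨hr0, S, hS, htr, hrate⟩ := hr
  obtain ⟨t, ht, htP⟩ : ∃ t > 1, t * ∑ l, (S l).trace.re < PT := by
    have hcont : Continuous fun t : ℝ ↦ t * ∑ l, (S l).trace.re := by fun_prop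
    refine ((hcont.tendsto 1).eventually_lt_const ?_).exists_gt
    rw [one_mul]
    exact htr.trans_lt hP
  have htS : ∀ k, ((t • S) k).PosSemidef := fun k ↦ (hS k).smul (zero_le_one.trans ht.le)
  obtain ⟨δ, hδ, hle⟩ := exists_one_add_smul_le (r := r) (s := bmacRate m n H Φ (t • S))
    (fun l ↦ bmacRate_nonneg (hΦ l) htS)
    fun l hl ↦ (hrate l).trans_lt (bmacRate_lt_bmacRate_smul (hΦ l) hS (hl.trans_le (hrate l)) ht)
  refine ⟨δ, hδ, fun l ↦ mul_nonneg (by linarith) (hr0 l), t • S, htS, ?_, hle⟩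
  simpa [trace_smul, Finset.mul_sum] using htP.le

end Bmac

theorem stmt0_general {L : ℕ} {m n : Fin L → ℕ}
    {H : ∀ l k : Fin L, Matrix (Fin (n l)) (Fin (m k)) ℂ}
    {Φ : Fin L → Fin L → ℝ} (hΦ : ∀ l k, 0 ≤ Φ l k) {PT : ℝ}
    {r : Fin L → ℝ} (hr : r ∈ bmacRegion m n H Φ PT)
    (hbd : ∀ δ : ℝ, 0 < δ → (1 + δ) • r ∉ bmacRegion m n H Φ PT) :
    Maximal (· ∈ bmacRegion m n H Φ PT) r := by
  refine maximal_iff_forall_gt.2 ⟨hr, fun r' hlt hr' ↦ ?_⟩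
  obtain ⟨P, hP, hrP⟩ := exists_lt_mem_bmacRegion hΦ hr.1 hlt hr'
  obtain ⟨δ, hδ, hmem⟩ := exists_one_add_smul_mem_bmacRegion hΦ hP hrP
  exact hbd δ hδ hmem

/-- Every boundary point of the achievable region is a strong Pareto optimum. -/
theorem stmt0 {L : ℕ} (hL : 1 ≤ L) (m n : Fin L → ℕ)
    (H : ∀ l k : Fin L, Matrix (Fin (n l)) (Fin (m k)) ℂ)
    (Φ : Fin L → Fin L → ℝ)
    (hΦ : ∀ l k, Φ l k = 0 ∨ Φ l k = 1) (hΦd : ∀ l, Φ l l = 0)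
    (PT : ℝ) (hPT : 0 < PT)
    (r : Fin L → ℝ) (hr : r ∈ bmacRegion m n H Φ PT)
    (hbd : ∀ δ : ℝ, 0 < δ → (1 + δ) • r ∉ bmacRegion m n H Φ PT) :
    ¬ ∃ r' ∈ bmacRegion m n H Φ PT, (∀ l, r l ≤ r' l) ∧ ∃ k, r k < r' k := by
  rintro ⟨r', hr', hlt⟩
  exact (stmt0_general (fun l k ↦ by rcases hΦ l k with h | h <;> simp [h]) hr hbd).not_gt
    hr' (Pi.lt_def.2 hlt)
end
end

section
/- Under the polite water-filling structure, the pair (Σ, Σ̂) satisfies the matrix equation Ω̂^{-1} H^† Σ̂ H = Σ H^† Ω^{-1} H. -/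
open Matrix ComplexOrder

noncomputable section

/-!
Write `W = Ω^{-1/2}`, `V = Ω̂^{-1/2}` and let `K = W H V = F Δ Gᴴ` be the whitened channel. Since
`F` and `G` have orthonormal columns, both `Kᴴ (F D Fᴴ)` and `(G D Gᴴ) Kᴴ` collapse to `G Δ D Fᴴ`,
because the diagonal matrices `Δ` and `D` commute. Multiplying by `V` on the left and by `W` on the
right undoes the whitening and gives `Ω̂⁻¹ Hᴴ Σ̂ = Σ Hᴴ Ω⁻¹`, which already holds before the
right-hand factor `H` is applied.
-/

lemma commute_conjTranspose_diagonal {R p : Type*} [NonUnitalNonAssocCommSemiring R]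
    [StarAddMonoid R] [Fintype p] [DecidableEq p] (s d : p → R) :
    Commute (diagonal s)ᴴ (diagonal d) := by
  rw [diagonal_conjTranspose]
  exact commute_diagonal _ _

section Intertwining

variable {R m n p : Type*} [Semiring R] [StarRing R]
  [Fintype m] [Fintype n] [Fintype p] [DecidableEq p]

lemma conjTranspose_mul_eq_mul_conjTranspose_of_eq_mul_mul
    {K : Matrix n m R} {F : Matrix n p R} {G : Matrix m p R} {S D : Matrix p p R}
    (hF : Fᴴ * F = 1) (hG : Gᴴ * G = 1) (hSD : Commute Sᴴ D) (hK : K = F * S * Gᴴ) :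
    Kᴴ * (F * D * Fᴴ) = G * D * Gᴴ * Kᴴ := by
  have hKH : Kᴴ = G * Sᴴ * Fᴴ := by
    simp only [hK, conjTranspose_mul, conjTranspose_conjTranspose, Matrix.mul_assoc]
  calc Kᴴ * (F * D * Fᴴ) = G * Sᴴ * (Fᴴ * F) * D * Fᴴ := by
        simp only [hKH, Matrix.mul_assoc]
    _ = G * (Sᴴ * D) * Fᴴ := by simp only [hF, Matrix.mul_one, Matrix.mul_assoc]
    _ = G * (D * Sᴴ) * Fᴴ := by rw [hSD.eq]
    _ = G * D * (Gᴴ * G) * Sᴴ * Fᴴ := by simp only [hG, Matrix.mul_one, Matrix.mul_assoc]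
    _ = G * D * Gᴴ * Kᴴ := by simp only [hKH, Matrix.mul_assoc]

theorem stmt5_general
    {W : Matrix n n R} {V : Matrix m m R} (hW : W.IsHermitian) (hV : V.IsHermitian)
    {H : Matrix n m R} {F : Matrix n p R} {G : Matrix m p R} {S D : Matrix p p R}
    (hF : Fᴴ * F = 1) (hG : Gᴴ * G = 1) (hSD : Commute Sᴴ D) (hSVD : W * H * V = F * S * Gᴴ) :
    V * V * Hᴴ * (W * F * D * Fᴴ * W) = V * G * D * Gᴴ * V * Hᴴ * (W * W) := by
  have hKH : (W * H * V)ᴴ = V * Hᴴ * W := by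
    simp only [conjTranspose_mul, hW.eq, hV.eq, Matrix.mul_assoc]
  have hintertwine : V * Hᴴ * W * (F * D * Fᴴ) = G * D * Gᴴ * (V * Hᴴ * W) :=
    hKH ▸ conjTranspose_mul_eq_mul_conjTranspose_of_eq_mul_mul hF hG hSD hSVD
  calc V * V * Hᴴ * (W * F * D * Fᴴ * W) = V * (V * Hᴴ * W * (F * D * Fᴴ)) * W := by
        simp only [Matrix.mul_assoc]
    _ = V * (G * D * Gᴴ * (V * Hᴴ * W)) * W := by rw [hintertwine]
    _ = V * G * D * Gᴴ * V * Hᴴ * (W * W) := by simp only [Matrix.mul_assoc]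

end Intertwining

/-- Under the polite water-filling structure, the forward and dual covariances
satisfy the matrix equation `Ω̂⁻¹ Hᴴ Σ̂ H = Σ Hᴴ Ω⁻¹ H`. -/
theorem stmt5 {n' m' N : ℕ}
    (Ω : Matrix (Fin n') (Fin n') ℂ) (Ωh : Matrix (Fin m') (Fin m') ℂ)
    (hΩ : Ω.PosDef) (hΩh : Ωh.PosDef)
    (sqΩ : Matrix (Fin n') (Fin n') ℂ)
    (hsqΩ : sqΩ.PosDef) (hsqΩ2 : sqΩ * sqΩ = Ω)
    (sqΩh : Matrix (Fin m') (Fin m') ℂ)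
    (hsqΩh : sqΩh.PosDef) (hsqΩh2 : sqΩh * sqΩh = Ωh)
    (H : Matrix (Fin n') (Fin m') ℂ)
    (F : Matrix (Fin n') (Fin N) ℂ) (G : Matrix (Fin m') (Fin N) ℂ)
    (hF : Fᴴ * F = 1) (hG : Gᴴ * G = 1)
    (δ : Fin N → ℝ) (hδ : ∀ i, 0 < δ i)
    (hSVD : sqΩ⁻¹ * H * sqΩh⁻¹ = F * Matrix.diagonal (fun i => (δ i : ℂ)) * Gᴴ)
    (ν : ℝ) (hν : 0 ≤ ν)
    (D : Matrix (Fin N) (Fin N) ℂ)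
    (hD : D = Matrix.diagonal (fun i => ((max (ν - ((δ i) ^ 2)⁻¹) 0 : ℝ) : ℂ)))
    (Sig : Matrix (Fin m') (Fin m') ℂ) (hSig : Sig = sqΩh⁻¹ * G * D * Gᴴ * sqΩh⁻¹)
    (Sigh : Matrix (Fin n') (Fin n') ℂ) (hSigh : Sigh = sqΩ⁻¹ * F * D * Fᴴ * sqΩ⁻¹) :
    Ωh⁻¹ * Hᴴ * Sigh * H = Sig * Hᴴ * Ω⁻¹ * H := by
  rw [hSig, hSigh, hD, ← hsqΩ2, ← hsqΩh2, Matrix.mul_inv_rev, Matrix.mul_inv_rev,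
    stmt5_general hsqΩ.isHermitian.inv hsqΩh.isHermitian.inv hF hG
      (commute_conjTranspose_diagonal _ _) hSVD]
end
end

section
/- Under the polite water-filling structure, the dual covariance matrix has the explicit expression Σ̂ = ν (Ω^{-1} − (H Σ H^† + Ω)^{-1}). -/
open Matrix ComplexOrder

noncomputable section

/-!
Each entry `d = (ν - δ⁻²)⁺` of the water-filling satisfies the complementary slackness relation
`d (1 + δ² d) = ν δ² d`: either `d = 0` or `1 + δ² d = ν δ²`. In matrix form, with `E = Δ D Δ`,
this is `D = ν (1 - (1 + E)⁻¹)`, which is the claim for the diagonal channel `Δ` with noise `1`.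
The isometry `F` embeds this identity into the whitened channel, and congruence by `Ω^{1/2}`
undoes the whitening.
-/

section PowerAllocation

/-- The power that water-filling at level `ν` allots to a channel of gain `δ`. At `δ = 0` the value
is the junk `ν⁺` rather than `0`, because `0⁻¹ = 0`. -/
def waterFillingPower (ν δ : ℝ) : ℝ :=
  max (ν - (δ ^ 2)⁻¹) 0

theorem waterFillingPower_nonneg (ν δ : ℝ) : 0 ≤ waterFillingPower ν δ :=
  le_max_right _ _

theorem waterFillingPower_mul_one_add (ν : ℝ) {δ : ℝ} (hδ : δ ≠ 0) :
    waterFillingPower ν δ * (1 + δ ^ 2 * waterFillingPower ν δ) =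
      ν * (δ ^ 2 * waterFillingPower ν δ) := by
  unfold waterFillingPower
  rcases le_total (ν - (δ ^ 2)⁻¹) 0 with h | h
  · simp [max_eq_right h]
  · rw [max_eq_left h]
    field_simp
    ring

end PowerAllocation

section WaterFillingMatrix

theorem one_add_diagonal {R ρ : Type*} [AddMonoidWithOne R] [DecidableEq ρ] (e : ρ → R) :
    1 + diagonal e = diagonal fun i => 1 + e i := by
  rw [← diagonal_one, diagonal_add]

variable {𝕜 ρ : Type*} [RCLike 𝕜] [DecidableEq ρ]

variable (𝕜) in
/-- The diagonal matrix `(ν - Δ⁻²)⁺` of powers that water-filling at level `ν` allots to parallel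
channels with gains `Δ = diag(δ)`. -/
def waterFillingMatrix (ν : ℝ) (δ : ρ → ℝ) : Matrix ρ ρ 𝕜 :=
  diagonal fun i => (waterFillingPower ν (δ i) : 𝕜)

variable [Fintype ρ]

theorem diagonal_mul_waterFillingMatrix_mul_conjTranspose (ν : ℝ) (δ : ρ → ℝ) :
    diagonal (fun i => (δ i : 𝕜)) * waterFillingMatrix 𝕜 ν δ *
        (diagonal fun i => (δ i : 𝕜))ᴴ =
      diagonal fun i => ((δ i ^ 2 * waterFillingPower ν (δ i) : ℝ) : 𝕜) := by
  simp only [waterFillingMatrix, diagonal_conjTranspose, diagonal_mul_diagonal, Pi.star_apply,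
    RCLike.star_def, RCLike.conj_ofReal]
  congr! 2 with i
  push_cast
  ring

theorem isUnit_one_add_diagonal_ofReal {e : ρ → ℝ} (he : ∀ i, 0 ≤ e i) :
    IsUnit (1 + diagonal fun i => (e i : 𝕜)) := by
  rw [one_add_diagonal, isUnit_diagonal, Pi.isUnit_iff]
  intro i
  have h_ne : 1 + e i ≠ 0 := by linarith [he i]
  exact IsUnit.mk0 _ (mod_cast h_ne)

theorem waterFillingMatrix_mul_one_add (ν : ℝ) {δ : ρ → ℝ} (hδ : ∀ i, δ i ≠ 0) :
    waterFillingMatrix 𝕜 ν δ *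
        (1 + diagonal fun i => ((δ i ^ 2 * waterFillingPower ν (δ i) : ℝ) : 𝕜)) =
      ν • diagonal fun i => ((δ i ^ 2 * waterFillingPower ν (δ i) : ℝ) : 𝕜) := by
  rw [one_add_diagonal, waterFillingMatrix, diagonal_mul_diagonal, ← diagonal_smul]
  congr 1
  ext i
  rw [Pi.smul_apply, RCLike.real_smul_eq_coe_mul]
  exact_mod_cast waterFillingPower_mul_one_add ν (hδ i)

end WaterFillingMatrix

section MatrixIdentities

variable {α R ι κ μ ρ : Type*} [CommRing R] [Fintype ι] [DecidableEq ι] [Fintype ρ]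
  [DecidableEq ρ]

theorem isUnit_one_add_mul_mul {U : Matrix ι ρ R} {V : Matrix ρ ι R} (hVU : V * U = 1)
    {E : Matrix ρ ρ R} (hE : IsUnit (1 + E)) : IsUnit (1 + U * E * V) := by
  rw [isUnit_iff_isUnit_det] at hE ⊢
  rwa [Matrix.mul_assoc, det_one_add_mul_comm, Matrix.mul_assoc, hVU, Matrix.mul_one]

theorem mul_mul_eq_smul_one_sub_inv [CommSemiring α] [Algebra α R] {U : Matrix ι ρ R}
    {V : Matrix ρ ι R} (hVU : V * U = 1) {D E : Matrix ρ ρ R} (hE : IsUnit (1 + E)) {c : α}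
    (hD : D * (1 + E) = c • E) : U * D * V = c • (1 - (1 + U * E * V)⁻¹) := by
  have hdet : IsUnit (1 + U * E * V).det :=
    (isUnit_iff_isUnit_det _).mp (isUnit_one_add_mul_mul hVU hE)
  have h_mul : U * D * V * (1 + U * E * V) = c • (U * E * V) := calc
    U * D * V * (1 + U * E * V) = U * D * V + U * D * (V * U) * E * V := by
      rw [Matrix.mul_add, Matrix.mul_one]
      simp only [Matrix.mul_assoc]
    _ = U * (D * (1 + E)) * V := by
      rw [hVU]
      simp only [Matrix.mul_add, Matrix.add_mul, Matrix.mul_one, Matrix.mul_assoc]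
    _ = c • (U * E * V) := by rw [hD, Matrix.mul_smul, Matrix.smul_mul]
  calc U * D * V = c • (U * E * V) * (1 + U * E * V)⁻¹ := by
        rw [← h_mul, mul_nonsing_inv_cancel_right _ _ hdet]
    _ = c • ((1 + U * E * V - 1) * (1 + U * E * V)⁻¹) := by
        rw [add_sub_cancel_left, Matrix.smul_mul]
    _ = c • (1 - (1 + U * E * V)⁻¹) := by
        rw [Matrix.sub_mul, mul_nonsing_inv _ hdet, Matrix.one_mul]

theorem inv_mul_smul_one_sub_inv_mul_inv [CommSemiring α] [Algebra α R] (S T X : Matrix ι ι R)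
    (c : α) : T⁻¹ * (c • (1 - X⁻¹)) * S⁻¹ = c • ((S * T)⁻¹ - (S * X * T)⁻¹) := by
  simp only [Matrix.mul_inv_rev, Matrix.mul_smul, Matrix.smul_mul, Matrix.mul_sub,
    Matrix.sub_mul, Matrix.mul_one, Matrix.mul_assoc]

theorem mul_covariance_mul_conjTranspose_add [StarRing R] [Fintype κ] [Fintype μ]
    {S : Matrix ι ι R} (hS : IsUnit S) {H : Matrix ι κ R} {A : Matrix κ μ R} {F : Matrix ι ρ R}
    {G : Matrix μ ρ R} (hG : Gᴴ * G = 1) {Δ : Matrix ρ ρ R} (hSVD : S⁻¹ * H * A = F * Δ * Gᴴ)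
    (D : Matrix ρ ρ R) :
    H * (A * G * D * Gᴴ * Aᴴ) * Hᴴ + S * Sᴴ = S * (1 + F * (Δ * D * Δᴴ) * Fᴴ) * Sᴴ := by
  have hHAG : H * A * G = S * F * Δ := calc
    H * A * G = S * (S⁻¹ * H * A) * G := by
      rw [Matrix.mul_assoc S⁻¹,
        mul_nonsing_inv_cancel_left _ _ ((isUnit_iff_isUnit_det S).mp hS)]
    _ = S * F * Δ * (Gᴴ * G) := by
      rw [hSVD]
      simp only [Matrix.mul_assoc]
    _ = S * F * Δ := by rw [hG, Matrix.mul_one]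
  calc H * (A * G * D * Gᴴ * Aᴴ) * Hᴴ + S * Sᴴ
      = H * A * G * D * (H * A * G)ᴴ + S * Sᴴ := by
        simp only [conjTranspose_mul, Matrix.mul_assoc]
    _ = S * (1 + F * (Δ * D * Δᴴ) * Fᴴ) * Sᴴ := by
        rw [hHAG, add_comm]
        simp only [conjTranspose_mul, Matrix.mul_add, Matrix.add_mul, Matrix.mul_one,
          Matrix.mul_assoc]

end MatrixIdentities

-- `S` is any factor of the noise covariance `Ω = S Sᴴ`, and `A` stands for `Ω̂^{-1/2}`.
theorem stmt6_general {𝕜 ι κ μ ρ : Type*} [RCLike 𝕜] [Fintype ι] [DecidableEq ι] [Fintype κ]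
    [Fintype μ] [Fintype ρ] [DecidableEq ρ] {S : Matrix ι ι 𝕜} (hS : IsUnit S)
    {H : Matrix ι κ 𝕜} {A : Matrix κ μ 𝕜} {F : Matrix ι ρ 𝕜} {G : Matrix μ ρ 𝕜}
    (hF : Fᴴ * F = 1) (hG : Gᴴ * G = 1) {δ : ρ → ℝ} (hδ : ∀ i, δ i ≠ 0)
    (hSVD : S⁻¹ * H * A = F * diagonal (fun i => (δ i : 𝕜)) * Gᴴ) (ν : ℝ) :
    Sᴴ⁻¹ * (F * waterFillingMatrix 𝕜 ν δ * Fᴴ) * S⁻¹ =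
      ν • ((S * Sᴴ)⁻¹ -
        (H * (A * G * waterFillingMatrix 𝕜 ν δ * Gᴴ * Aᴴ) * Hᴴ + S * Sᴴ)⁻¹) := by
  have h_unit : IsUnit
      (1 + diagonal fun i => ((δ i ^ 2 * waterFillingPower ν (δ i) : ℝ) : 𝕜)) :=
    isUnit_one_add_diagonal_ofReal fun i =>
      mul_nonneg (sq_nonneg _) (waterFillingPower_nonneg ν (δ i))
  rw [mul_covariance_mul_conjTranspose_add hS hG hSVD,
    diagonal_mul_waterFillingMatrix_mul_conjTranspose, ← inv_mul_smul_one_sub_inv_mul_inv,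
    mul_mul_eq_smul_one_sub_inv hF h_unit (waterFillingMatrix_mul_one_add ν hδ)]

/-- Under the polite water-filling structure, the dual covariance has the
explicit expression `Σ̂ = ν (Ω⁻¹ − (H Σ Hᴴ + Ω)⁻¹)`. -/
theorem stmt6 {n' m' N : ℕ}
    (Ω : Matrix (Fin n') (Fin n') ℂ) (Ωh : Matrix (Fin m') (Fin m') ℂ)
    (hΩ : Ω.PosDef) (hΩh : Ωh.PosDef)
    (sqΩ : Matrix (Fin n') (Fin n') ℂ)
    (hsqΩ : sqΩ.PosDef) (hsqΩ2 : sqΩ * sqΩ = Ω)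
    (sqΩh : Matrix (Fin m') (Fin m') ℂ)
    (hsqΩh : sqΩh.PosDef) (hsqΩh2 : sqΩh * sqΩh = Ωh)
    (H : Matrix (Fin n') (Fin m') ℂ)
    (F : Matrix (Fin n') (Fin N) ℂ) (G : Matrix (Fin m') (Fin N) ℂ)
    (hF : Fᴴ * F = 1) (hG : Gᴴ * G = 1)
    (δ : Fin N → ℝ) (hδ : ∀ i, 0 < δ i)
    (hSVD : sqΩ⁻¹ * H * sqΩh⁻¹ = F * Matrix.diagonal (fun i => (δ i : ℂ)) * Gᴴ)
    (ν : ℝ) (hν : 0 ≤ ν)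
    (D : Matrix (Fin N) (Fin N) ℂ)
    (hD : D = Matrix.diagonal (fun i => ((max (ν - ((δ i) ^ 2)⁻¹) 0 : ℝ) : ℂ)))
    (Sig : Matrix (Fin m') (Fin m') ℂ) (hSig : Sig = sqΩh⁻¹ * G * D * Gᴴ * sqΩh⁻¹)
    (Sigh : Matrix (Fin n') (Fin n') ℂ) (hSigh : Sigh = sqΩ⁻¹ * F * D * Fᴴ * sqΩ⁻¹) :
    Sigh = ν • (Ω⁻¹ - (H * Sig * Hᴴ + Ω)⁻¹) := by
  subst hsqΩ2 hD hSig hSigh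
  simpa only [waterFillingMatrix, waterFillingPower, hsqΩ.isHermitian.eq,
    hsqΩh.inv.isHermitian.eq, Matrix.mul_assoc, RCLike.ofReal_eq_complex_ofReal] using
    stmt6_general hsqΩ.isUnit hF hG (fun i => (hδ i).ne') hSVD ν
end
end

section
/- The achievable rate region of the network with linear constraint and colored noise equals that of its dual network: R = R̂. -/
open Matrix ComplexOrder

noncomputable section

/-- Interference-plus-noise covariance of link `l` with colored noise `Wn`. -/
def genOmega {L : ℕ} (m n : Fin L → ℕ)
    (H : ∀ l k : Fin L, Matrix (Fin (n l)) (Fin (m k)) ℂ)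
    (Φ : Fin L → Fin L → ℝ)
    (Wn : ∀ l : Fin L, Matrix (Fin (n l)) (Fin (n l)) ℂ)
    (S : ∀ k : Fin L, Matrix (Fin (m k)) (Fin (m k)) ℂ) (l : Fin L) :
    Matrix (Fin (n l)) (Fin (n l)) ℂ :=
  Wn l + ∑ k : Fin L, Φ l k • (H l k * S k * (H l k)ᴴ)

/-- Rate of link `l` with colored noise `Wn`. -/
def genRate {L : ℕ} (m n : Fin L → ℕ)
    (H : ∀ l k : Fin L, Matrix (Fin (n l)) (Fin (m k)) ℂ)
    (Φ : Fin L → Fin L → ℝ)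
    (Wn : ∀ l : Fin L, Matrix (Fin (n l)) (Fin (n l)) ℂ)
    (S : ∀ k : Fin L, Matrix (Fin (m k)) (Fin (m k)) ℂ) (l : Fin L) : ℝ :=
  Real.log ((genOmega m n H Φ Wn S l + H l l * S l * (H l l)ᴴ).det.re)
    - Real.log ((genOmega m n H Φ Wn S l).det.re)

/-- Achievable rate region of the network with linear constraint matrices `Wc`
and noise covariances `Wn`. -/
def genRegion {L : ℕ} (m n : Fin L → ℕ)
    (H : ∀ l k : Fin L, Matrix (Fin (n l)) (Fin (m k)) ℂ)
    (Φ : Fin L → Fin L → ℝ)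
    (Wc : ∀ k : Fin L, Matrix (Fin (m k)) (Fin (m k)) ℂ)
    (Wn : ∀ l : Fin L, Matrix (Fin (n l)) (Fin (n l)) ℂ)
    (PT : ℝ) : Set (Fin L → ℝ) :=
  {r | (∀ l, 0 ≤ r l) ∧
    ∃ S : ∀ k : Fin L, Matrix (Fin (m k)) (Fin (m k)) ℂ,
      (∀ k, (S k).PosSemidef) ∧
      (∑ l, (Matrix.trace (S l * Wc l)).re) ≤ PT ∧
      ∀ l, r l ≤ genRate m n H Φ Wn S l}

/-!
A transmit covariance is a sum of rank-one matrices, that is, a superposition of data streams. By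
the chain rule for `log det`, the rate of a link is the sum of `log (1 + sinr)` over its streams
when these are decoded successively with MMSE receivers. In the dual network, use the MMSE receivers
as transmit vectors and the old transmit vectors as receivers, and reverse the decoding order: the
matrix of coupling gains is then transposed. The powers that give every stream its old
signal-to-interference-plus-noise ratio solve a linear system whose matrix is an M-matrix, so they
are nonnegative, and summing the equations shows that the total power does not increase. Optimal
receivers in the dual network can only improve the ratios.
-/

section ZMatrix

variable {ι R : Type*} [Fintype ι] [LinearOrder R]

/-- A strictly row-dominant Z-matrix: the off-diagonal entries are nonpositive and the row sums are
positive. Such a matrix is a nonsingular M-matrix: it is invertible with a nonnegative inverse. -/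
structure IsRowDominantZMatrix [Ring R] (M : Matrix ι ι R) : Prop where
  offDiag_nonpos : ∀ i j, i ≠ j → M i j ≤ 0
  rowSum_pos : ∀ i, 0 < ∑ j, M i j

namespace IsRowDominantZMatrix

lemma nonneg_of_mulVec_nonneg [Ring R] [IsStrictOrderedRing R] {M : Matrix ι ι R}
    (hM : IsRowDominantZMatrix M) {x : ι → R} (hx : 0 ≤ M *ᵥ x) : 0 ≤ x := by
  intro i
  have : Nonempty ι := ⟨i⟩
  obtain ⟨a, ha⟩ := Finite.exists_min x
  refine le_trans ?_ (ha i)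
  by_contra! hneg
  have hle : (M *ᵥ x) a ≤ (∑ j, M a j) * x a := by
    rw [Finset.sum_mul]
    refine Finset.sum_le_sum fun j _ => ?_
    obtain rfl | haj := eq_or_ne a j
    · exact le_rfl
    · exact mul_le_mul_of_nonpos_left (ha j) (hM.offDiag_nonpos a j haj)
  exact ((hx a).trans hle).not_gt (mul_neg_of_pos_of_neg (hM.rowSum_pos a) hneg)

lemma det_ne_zero [CommRing R] [IsStrictOrderedRing R] [DecidableEq ι] {M : Matrix ι ι R}
    (hM : IsRowDominantZMatrix M) : M.det ≠ 0 := by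
  intro hdet
  obtain ⟨x, hx0, hx⟩ := exists_mulVec_eq_zero_iff.2 hdet
  have hneg : 0 ≤ -x := hM.nonneg_of_mulVec_nonneg (by rw [mulVec_neg, hx, neg_zero])
  exact hx0 (le_antisymm (neg_nonneg.1 hneg) (hM.nonneg_of_mulVec_nonneg hx.ge))

lemma inv_nonneg [Field R] [IsStrictOrderedRing R] [DecidableEq ι] {M : Matrix ι ι R}
    (hM : IsRowDominantZMatrix M) (i j : ι) : 0 ≤ M⁻¹ i j := by
  have hcol : M *ᵥ M⁻¹.col j = Pi.single j 1 := by
    rw [← mulVec_single_one, mulVec_mulVec, mul_nonsing_inv _ hM.det_ne_zero.isUnit, one_mulVec]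
  refine hM.nonneg_of_mulVec_nonneg (x := M⁻¹.col j) ?_ i
  rw [hcol]
  exact Pi.single_nonneg.2 zero_le_one

end IsRowDominantZMatrix

lemma exists_dual_powers [Field R] [IsStrictOrderedRing R] {A : ι → ι → R} {ν c : ι → R}
    (hA : ∀ j k, 0 ≤ A j k) (hν : ∀ j, 0 < ν j) (hc : ∀ j, 0 ≤ c j) :
    ∃ q : ι → R, (∀ j, 0 ≤ q j) ∧
      (∀ j, q j * (ν j + ∑ k, A j k) = c j + ∑ k, q k * A k j) ∧
      ∑ j, q j * ν j = ∑ j, c j := by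
  classical
  let M : Matrix ι ι R := diagonal (fun j => ν j + ∑ k, A j k) - of A
  have hM : IsRowDominantZMatrix M :=
    { offDiag_nonpos := fun i j hij => by simpa [M, hij] using hA i j
      rowSum_pos := fun i => by simpa [M, diagonal_apply] using hν i }
  let q := c ᵥ* M⁻¹
  have hqM : q ᵥ* M = c := by
    rw [vecMul_vecMul, nonsing_inv_mul _ hM.det_ne_zero.isUnit, vecMul_one]
  have hbal (j : ι) : q j * (ν j + ∑ k, A j k) = c j + ∑ k, q k * A k j := by
    rw [← hqM, vecMul_sub, Pi.sub_apply, vecMul_diagonal]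
    exact (sub_add_cancel _ _).symm
  refine ⟨q, fun j => Finset.sum_nonneg fun i _ => mul_nonneg (hc i) (hM.inv_nonneg i j), hbal, ?_⟩
  have hsum : ∑ j, q j * (ν j + ∑ k, A j k) = ∑ j, (c j + ∑ k, q k * A k j) :=
    Finset.sum_congr rfl fun j _ => hbal j
  simp_rw [mul_add, Finset.sum_add_distrib, Finset.mul_sum] at hsum
  rw [Finset.sum_comm (f := fun j k => q k * A k j)] at hsum
  exact add_right_cancel hsum

end ZMatrix

section QuadraticForms

variable {𝕜 α β : Type*} [RCLike 𝕜]

/-- The rank-one positive semidefinite matrix `x xᴴ`, the covariance of a single data stream sent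
along `x`. -/
def rankOne (x : α → 𝕜) : Matrix α α 𝕜 := vecMulVec x (star x)

lemma posSemidef_rankOne [Finite α] (x : α → 𝕜) : (rankOne x).PosSemidef :=
  posSemidef_vecMulVec_self_star x

lemma posSemidef_sum_rankOne [Finite α] {ι : Type*} (s : Finset ι) (x : ι → α → 𝕜) :
    (∑ i ∈ s, rankOne (x i)).PosSemidef :=
  posSemidef_sum s fun i _ => posSemidef_rankOne (x i)

variable [Fintype β]

lemma mul_rankOne_mul_conjTranspose (G : Matrix α β 𝕜) (x : β → 𝕜) :
    G * rankOne x * Gᴴ = rankOne (G *ᵥ x) := by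
  rw [rankOne, mul_vecMulVec, vecMulVec_mul, rankOne, star_mulVec]

lemma mul_sum_rankOne_mul_conjTranspose {ι : Type*} (s : Finset ι) (G : Matrix α β 𝕜)
    (x : ι → β → 𝕜) : G * (∑ i ∈ s, rankOne (x i)) * Gᴴ = ∑ i ∈ s, rankOne (G *ᵥ x i) := by
  simp_rw [Matrix.mul_sum, Matrix.sum_mul, mul_rankOne_mul_conjTranspose]

variable [Fintype α]

/-- The real part of the quadratic form `xᴴ M x`, that is, the form itself when `M` is Hermitian:
the power which a receiver `x` collects from a signal with covariance `M`. -/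
def quadForm (M : Matrix α α 𝕜) (x : α → 𝕜) : ℝ := RCLike.re (star x ⬝ᵥ M *ᵥ x)

/-- The gain `|yᴴ G x|²` from the transmit vector `x` through the channel `G` to the receive vector
`y`. -/
def gain (y : α → 𝕜) (G : Matrix α β 𝕜) (x : β → 𝕜) : ℝ := ‖star y ⬝ᵥ G *ᵥ x‖ ^ 2

lemma gain_nonneg (y : α → 𝕜) (G : Matrix α β 𝕜) (x : β → 𝕜) : 0 ≤ gain y G x :=
  sq_nonneg _

lemma gain_conjTranspose (y : α → 𝕜) (G : Matrix α β 𝕜) (x : β → 𝕜) :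
    gain x Gᴴ y = gain y G x := by
  have h : star x ⬝ᵥ Gᴴ *ᵥ y = star (star y ⬝ᵥ G *ᵥ x) := by
    rw [← star_dotProduct, star_mulVec, dotProduct_mulVec]
  rw [gain, gain, h, norm_star]

lemma gain_smul_right (y : α → 𝕜) (G : Matrix α β 𝕜) (c : ℝ) (x : β → 𝕜) :
    gain y G (c • x) = c ^ 2 * gain y G x := by
  simp [gain, mulVec_smul, dotProduct_smul, norm_smul, mul_pow]

lemma quadForm_zero (M : Matrix α α 𝕜) : quadForm M 0 = 0 := by
  simp [quadForm]

lemma quadForm_add (M N : Matrix α α 𝕜) (x : α → 𝕜) :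
    quadForm (M + N) x = quadForm M x + quadForm N x := by
  simp [quadForm, add_mulVec]

lemma quadForm_sum {ι : Type*} (s : Finset ι) (M : ι → Matrix α α 𝕜) (x : α → 𝕜) :
    quadForm (∑ i ∈ s, M i) x = ∑ i ∈ s, quadForm (M i) x := by
  simp [quadForm, sum_mulVec, dotProduct_sum]

lemma quadForm_smul (c : ℝ) (M : Matrix α α 𝕜) (x : α → 𝕜) :
    quadForm (c • M) x = c * quadForm M x := by
  simp [quadForm, smul_mulVec, RCLike.smul_re]

lemma quadForm_smul_right (M : Matrix α α 𝕜) (c : ℝ) (x : α → 𝕜) :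
    quadForm M (c • x) = c ^ 2 * quadForm M x := by
  simp [quadForm, mulVec_smul, star_smul, RCLike.smul_re, sq, mul_assoc]

lemma quadForm_rankOne_mulVec (G : Matrix α β 𝕜) (x : β → 𝕜) (y : α → 𝕜) :
    quadForm (rankOne (G *ᵥ x)) y = gain y G x := by
  have h : star (G *ᵥ x) ⬝ᵥ y = star (star y ⬝ᵥ G *ᵥ x) := star_dotProduct _ _
  simp [quadForm, gain, rankOne, vecMulVec_mulVec, h, RCLike.norm_sq_eq_def]

lemma re_trace_rankOne_mul (x : α → 𝕜) (W : Matrix α α 𝕜) :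
    RCLike.re (trace (rankOne x * W)) = quadForm W x := by
  rw [rankOne, vecMulVec_mul, trace_vecMulVec, dotProduct_comm, ← dotProduct_mulVec, quadForm]

lemma quadForm_nonneg {M : Matrix α α 𝕜} (hM : M.PosSemidef) (x : α → 𝕜) : 0 ≤ quadForm M x :=
  hM.re_dotProduct_nonneg x

lemma quadForm_pos {M : Matrix α α 𝕜} (hM : M.PosDef) {x : α → 𝕜} (hx : x ≠ 0) :
    0 < quadForm M x :=
  hM.re_dotProduct_pos hx

lemma ofReal_quadForm {M : Matrix α α 𝕜} (hM : M.PosSemidef) (x : α → 𝕜) :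
    (quadForm M x : 𝕜) = star x ⬝ᵥ M *ᵥ x :=
  RCLike.conj_eq_iff_re.1 <| RCLike.conj_eq_iff_im.2
    (RCLike.nonneg_iff.1 (hM.dotProduct_mulVec_nonneg x)).2

lemma gain_le_quadForm_mul_quadForm {M : Matrix α α 𝕜} (hM : M.PosSemidef) (x y : α → 𝕜) :
    gain x M y ≤ quadForm M x * quadForm M y := by
  let _ := M.toSeminormedAddCommGroup hM
  let _ := M.toInnerProductSpace hM
  have h := inner_mul_inner_self_le (𝕜 := 𝕜) x y
  rw [norm_inner_symm y, ← sq] at h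
  simp only [gain, quadForm, dotProduct_comm (star _)]
  exact h

variable [DecidableEq α]

lemma mulVec_inv_mulVec {M : Matrix α α 𝕜} (hM : M.PosDef) (x : α → 𝕜) :
    M *ᵥ (M⁻¹ *ᵥ x) = x := by
  rw [mulVec_mulVec, mul_nonsing_inv _ ((isUnit_iff_isUnit_det M).1 hM.isUnit), one_mulVec]

lemma quadForm_inv_mulVec {M : Matrix α α 𝕜} (hM : M.PosDef) (x : α → 𝕜) :
    quadForm M (M⁻¹ *ᵥ x) = quadForm M⁻¹ x := by
  rw [quadForm, mulVec_inv_mulVec hM, star_mulVec, hM.inv.isHermitian.eq, ← dotProduct_mulVec,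
    quadForm]

lemma gain_le_quadForm_mul_quadForm_inv {M : Matrix α α 𝕜} (hM : M.PosDef) (y : α → 𝕜)
    (G : Matrix α β 𝕜) (x : β → 𝕜) :
    gain y G x ≤ quadForm M y * quadForm M⁻¹ (G *ᵥ x) := by
  have h := gain_le_quadForm_mul_quadForm hM.posSemidef y (M⁻¹ *ᵥ (G *ᵥ x))
  rwa [quadForm_inv_mulVec hM, gain, mulVec_inv_mulVec hM] at h

lemma gain_inv_mulVec {M : Matrix α α 𝕜} (hM : M.PosDef) (G : Matrix α β 𝕜) (x : β → 𝕜) :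
    gain (M⁻¹ *ᵥ (G *ᵥ x)) G x = quadForm M⁻¹ (G *ᵥ x) ^ 2 := by
  rw [gain, star_mulVec, hM.inv.isHermitian.eq, ← dotProduct_mulVec,
    ← ofReal_quadForm hM.inv.posSemidef, RCLike.norm_ofReal, sq_abs]

end QuadraticForms

section LogDet

variable {𝕜 α : Type*} [RCLike 𝕜] [Fintype α] [DecidableEq α]

lemma det_add_vecMulVec {R : Type*} [CommRing R] {M : Matrix α α R} (hM : IsUnit M.det)
    (x y : α → R) : (M + vecMulVec x y).det = M.det * (1 + y ⬝ᵥ M⁻¹ *ᵥ x) := by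
  rw [vecMulVec_eq Unit, det_add_replicateCol_mul_replicateRow hM, ← replicateRow_vecMul,
    det_unique (n := Unit), dotProduct_mulVec]
  rfl

lemma re_det_add_rankOne {M : Matrix α α 𝕜} (hM : M.PosDef) (x : α → 𝕜) :
    RCLike.re (M + rankOne x).det = RCLike.re M.det * (1 + quadForm M⁻¹ x) := by
  rw [rankOne, det_add_vecMulVec ((isUnit_iff_isUnit_det M).1 hM.isUnit),
    ← ofReal_quadForm hM.inv.posSemidef, ← RCLike.ofReal_one, ← RCLike.ofReal_add,
    RCLike.re_mul_ofReal]

lemma re_det_pos_s8 {M : Matrix α α 𝕜} (hM : M.PosDef) : 0 < RCLike.re M.det :=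
  (RCLike.pos_iff.1 hM.det_pos).1

lemma log_det_add_rankOne {M : Matrix α α 𝕜} (hM : M.PosDef) (x : α → 𝕜) :
    Real.log (RCLike.re (M + rankOne x).det) =
      Real.log (RCLike.re M.det) + Real.log (1 + quadForm M⁻¹ x) := by
  have hx := quadForm_nonneg hM.inv.posSemidef x
  rw [re_det_add_rankOne hM, Real.log_mul (re_det_pos_s8 hM).ne' (by positivity)]

lemma log_det_add_sum_rankOne_lt {ι : Type*} [LinearOrder ι] {M : Matrix α α 𝕜} (hM : M.PosDef)
    (x : ι → α → 𝕜) (s : Finset ι) :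
    Real.log (RCLike.re (M + ∑ i ∈ s, rankOne (x i)).det) - Real.log (RCLike.re M.det) =
      ∑ i ∈ s, Real.log (1 + quadForm (M + ∑ k ∈ s with k < i, rankOne (x k))⁻¹ (x i)) := by
  induction s using Finset.induction_on_max with
  | empty => simp
  | insert a s hs ih =>
    have ha : a ∉ s := fun h => (hs a h).false
    have hfilter_max : {k ∈ insert a s | k < a} = s := by
      rw [Finset.filter_insert, if_neg (lt_irrefl a), Finset.filter_true_of_mem hs]
    have hfilter (i : ι) (hi : i ∈ s) : {k ∈ insert a s | k < i} = {k ∈ s | k < i} := by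
      rw [Finset.filter_insert, if_neg (hs i hi).not_gt]
    have hold := Finset.sum_congr rfl fun i hi =>
      congrArg (fun t => Real.log (1 + quadForm (M + ∑ k ∈ t, rankOne (x k))⁻¹ (x i)))
        (hfilter i hi)
    rw [Finset.sum_insert ha, Finset.sum_insert ha, hfilter_max, hold, ← ih,
      add_comm (rankOne (x a)), ← add_assoc,
      log_det_add_rankOne (hM.add_posSemidef (posSemidef_sum_rankOne s x))]
    ring

lemma log_det_add_sum_rankOne_gt {ι : Type*} [LinearOrder ι] {M : Matrix α α 𝕜} (hM : M.PosDef)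
    (x : ι → α → 𝕜) (s : Finset ι) :
    Real.log (RCLike.re (M + ∑ i ∈ s, rankOne (x i)).det) - Real.log (RCLike.re M.det) =
      ∑ i ∈ s, Real.log (1 + quadForm (M + ∑ k ∈ s with i < k, rankOne (x k))⁻¹ (x i)) :=
  log_det_add_sum_rankOne_lt (ι := ιᵒᵈ) hM x s

end LogDet

section Streams

variable {𝕜 ι : Type*} [RCLike 𝕜] [Fintype ι] {α β : ι → Type*}
  [∀ k, Fintype (α k)] (φ : ι → ι → ℝ) (G : ∀ j k, Matrix (β j) (α k) 𝕜)
  (W : ∀ j, Matrix (β j) (β j) 𝕜) (v : ∀ k, α k → 𝕜)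

/-- Interference-plus-noise covariance at the receiver of stream `j`, when each stream `k` is sent
along the vector `v k` and disturbs stream `j` with weight `φ j k`. -/
def streamCov (j : ι) : Matrix (β j) (β j) 𝕜 :=
  W j + ∑ k, φ j k • rankOne (G j k *ᵥ v k)

variable {φ W}

lemma posDef_streamCov [∀ j, Finite (β j)] (hφ : ∀ j k, 0 ≤ φ j k) (hW : ∀ j, (W j).PosDef)
    (j : ι) : (streamCov φ G W v j).PosDef :=
  (hW j).add_posSemidef <| posSemidef_sum _ fun k _ => (posSemidef_rankOne _).smul (hφ j k)

variable (φ W) [∀ j, Fintype (β j)]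

lemma quadForm_streamCov (j : ι) (y : β j → 𝕜) :
    quadForm (streamCov φ G W v j) y =
      quadForm (W j) y + ∑ k, φ j k * gain y (G j k) (v k) := by
  simp_rw [streamCov, quadForm_add, quadForm_sum, quadForm_smul, quadForm_rankOne_mulVec]

variable [∀ j, DecidableEq (β j)]

/-- The receive vector of stream `j` that minimises the mean square error; it attains the maximal
signal-to-interference-plus-noise ratio. -/
def mmseReceiver (j : ι) : β j → 𝕜 := (streamCov φ G W v j)⁻¹ *ᵥ (G j j *ᵥ v j)

/-- Signal-to-interference-plus-noise ratio of stream `j` under its optimal linear receiver. -/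
def sinr (j : ι) : ℝ := quadForm (streamCov φ G W v j)⁻¹ (G j j *ᵥ v j)

variable {φ W}

lemma sinr_nonneg (hφ : ∀ j k, 0 ≤ φ j k) (hW : ∀ j, (W j).PosDef) (j : ι) :
    0 ≤ sinr φ G W v j :=
  quadForm_nonneg (posDef_streamCov G v hφ hW j).inv.posSemidef _

lemma gain_le_quadForm_mul_sinr (hφ : ∀ j k, 0 ≤ φ j k) (hW : ∀ j, (W j).PosDef) (j : ι)
    (y : β j → 𝕜) :
    gain y (G j j) (v j) ≤ quadForm (streamCov φ G W v j) y * sinr φ G W v j :=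
  gain_le_quadForm_mul_quadForm_inv (posDef_streamCov G v hφ hW j) y (G j j) (v j)

lemma gain_mmseReceiver (hφ : ∀ j k, 0 ≤ φ j k) (hW : ∀ j, (W j).PosDef) (j : ι) :
    gain (mmseReceiver φ G W v j) (G j j) (v j) = sinr φ G W v j ^ 2 :=
  gain_inv_mulVec (posDef_streamCov G v hφ hW j) (G j j) (v j)

lemma sinr_eq_quadForm_mmseReceiver_add (hφ : ∀ j k, 0 ≤ φ j k) (hW : ∀ j, (W j).PosDef) (j : ι) :
    sinr φ G W v j = quadForm (W j) (mmseReceiver φ G W v j) +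
      ∑ k, φ j k * gain (mmseReceiver φ G W v j) (G j k) (v k) := by
  rw [← quadForm_streamCov, mmseReceiver, quadForm_inv_mulVec (posDef_streamCov G v hφ hW j), sinr]

lemma sinr_le_sinr_smul_mmseReceiver [∀ k, DecidableEq (α k)] {V : ∀ k, Matrix (α k) (α k) 𝕜}
    (hφ : ∀ j k, 0 ≤ φ j k) (hW : ∀ j, (W j).PosDef) (hV : ∀ k, (V k).PosDef) {q : ι → ℝ}
    (hq : ∀ j, 0 ≤ q j) {j : ι} (hsinr : 0 < sinr φ G W v j)
    (hbal : q j * sinr φ G W v j = quadForm (V j) (v j) +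
      ∑ k, q k * (φ k j * gain (mmseReceiver φ G W v k) (G k j) (v j))) :
    sinr φ G W v j ≤ sinr (fun j k => φ k j) (fun j k => (G k j)ᴴ) V
      (fun j => √(q j) • mmseReceiver φ G W v j) j := by
  set r := mmseReceiver φ G W v
  have hφT (j k : ι) : 0 ≤ φ k j := hφ k j
  have hgain (k : ι) : gain (v j) (G k j)ᴴ (√(q k) • r k) = q k * gain (r k) (G k j) (v j) := by
    rw [gain_smul_right, Real.sq_sqrt (hq k), gain_conjTranspose]
  have hcov : quadForm (streamCov (fun j k => φ k j) (fun j k => (G k j)ᴴ) V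
      (fun j => √(q j) • r j) j) (v j) = q j * sinr φ G W v j := by
    rw [quadForm_streamCov, hbal]
    simp only [hgain, mul_left_comm]
  have hv : v j ≠ 0 := fun h => hsinr.ne' (by rw [sinr, h, mulVec_zero, quadForm_zero])
  have hpos : 0 < q j * sinr φ G W v j :=
    hcov ▸ quadForm_pos (posDef_streamCov (fun j k => (G k j)ᴴ) _ hφT hV j) hv
  have hcs := gain_le_quadForm_mul_sinr (fun j k => (G k j)ᴴ) (fun j => √(q j) • r j) hφT hV j (v j)
  rw [hcov, hgain, gain_mmseReceiver G v hφ hW, sq, ← mul_assoc] at hcs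
  exact le_of_mul_le_mul_left hcs hpos

lemma exists_dual_streams [∀ k, DecidableEq (α k)] {V : ∀ k, Matrix (α k) (α k) 𝕜}
    (hφ : ∀ j k, 0 ≤ φ j k) (hW : ∀ j, (W j).PosDef) (hV : ∀ k, (V k).PosDef) :
    ∃ w : ∀ j, β j → 𝕜, ∑ j, quadForm (W j) (w j) ≤ ∑ j, quadForm (V j) (v j) ∧
      ∀ j, sinr φ G W v j ≤ sinr (fun j k => φ k j) (fun j k => (G k j)ᴴ) V w j := by
  classical
  let r := mmseReceiver φ G W v
  -- A stream without signal has `r j = 0`; its noise power is replaced by `1` so that the power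
  -- balance equations remain nonsingular.
  let ν (j : ι) : ℝ := if r j = 0 then 1 else quadForm (W j) (r j)
  have hν (j : ι) : 0 < ν j := by
    by_cases hr : r j = 0
    · simp [ν, hr]
    · simpa [ν, hr] using quadForm_pos (hW j) hr
  have hνle (j : ι) : quadForm (W j) (r j) ≤ ν j := by
    by_cases hr : r j = 0 <;> simp [ν, hr, quadForm_zero]
  obtain ⟨q, hq, hbal, hpow⟩ := exists_dual_powers
    (fun j k => mul_nonneg (hφ j k) (gain_nonneg (r j) (G j k) (v k))) hν
    fun j => quadForm_nonneg (hV j).posSemidef (v j)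
  refine ⟨fun j => √(q j) • r j, ?_, fun j => ?_⟩
  · rw [← hpow]
    refine Finset.sum_le_sum fun j _ => ?_
    rw [quadForm_smul_right, Real.sq_sqrt (hq j)]
    exact mul_le_mul_of_nonneg_left (hνle j) (hq j)
  · obtain hsinr | hsinr := (sinr_nonneg G v hφ hW j).eq_or_lt
    · exact hsinr ▸ sinr_nonneg _ _ (fun j k => hφ k j) hV j
    · have hr : r j ≠ 0 := fun hr => hsinr.ne' <| by
        rw [← sq_eq_zero_iff, ← gain_mmseReceiver G v hφ hW]
        simp [gain, show mmseReceiver φ G W v j = 0 from hr]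
      have hνj : ν j = quadForm (W j) (r j) := if_neg hr
      refine sinr_le_sinr_smul_mmseReceiver G v hφ hW hV hq hsinr ?_
      rw [← hbal j, hνj, sinr_eq_quadForm_mmseReceiver_add G v hφ hW]

end Streams

section Network

lemma sum_sigma_ite {ι M : Type*} {d : ι → Type*} [Fintype ι] [∀ l, Fintype (d l)]
    [AddCommMonoid M] {p : (Σ l, d l) → Prop} [DecidablePred p] (l : ι)
    (hp : ∀ k, p k → k.1 = l) (f : (Σ l, d l) → M) :
    ∑ k, (if p k then f k else 0) = ∑ i with p ⟨l, i⟩, f ⟨l, i⟩ := by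
  rw [Fintype.sum_sigma, Finset.sum_filter]
  exact Fintype.sum_eq_single l fun k hk =>
    Finset.sum_eq_zero fun i _ => if_neg fun h => hk (hp _ h)

open Classical in
/-- The coupling between the individual streams of a network with link coupling `Φ` under successive
decoding: besides the interference between links, a stream is disturbed by the later streams of its
own link, since `j < k` in a sigma type forces `j` and `k` into the same fibre. Exchanging the
arguments reverses the decoding order. -/
def sicCoupling {ι : Type*} {d : ι → Type*} [∀ l, LT (d l)] (Φ : ι → ι → ℝ) (j k : Σ l, d l) : ℝ :=
  Φ j.1 k.1 + if j < k then 1 else 0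

lemma sicCoupling_nonneg {ι : Type*} {d : ι → Type*} [∀ l, LT (d l)] {Φ : ι → ι → ℝ}
    (hΦ : ∀ l k, 0 ≤ Φ l k) (j k : Σ l, d l) : 0 ≤ sicCoupling Φ j k :=
  add_nonneg (hΦ _ _) (by split_ifs <;> norm_num)

variable {L : ℕ} {m n : Fin L → ℕ} (H : ∀ l k : Fin L, Matrix (Fin (n l)) (Fin (m k)) ℂ)
  {Φ : Fin L → Fin L → ℝ} {Wn : ∀ l : Fin L, Matrix (Fin (n l)) (Fin (n l)) ℂ}

lemma posDef_genOmega (hΦ : ∀ l k, 0 ≤ Φ l k) (hWn : ∀ l, (Wn l).PosDef)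
    {S : ∀ k : Fin L, Matrix (Fin (m k)) (Fin (m k)) ℂ} (hS : ∀ k, (S k).PosSemidef) (l : Fin L) :
    (genOmega m n H Φ Wn S l).PosDef :=
  (hWn l).add_posSemidef <| posSemidef_sum _ fun k _ =>
    ((hS k).mul_mul_conjTranspose_same (H l k)).smul (hΦ l k)

variable {d : Fin L → Type*} [∀ l, Fintype (d l)]

/-- The transmit covariance of link `l` when it sends one data stream of unit power along each of
the vectors `v ⟨l, i⟩`. -/
def linkCov (v : ∀ j : Σ l, d l, Fin (m j.1) → ℂ) (l : Fin L) : Matrix (Fin (m l)) (Fin (m l)) ℂ :=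
  ∑ i, rankOne (v ⟨l, i⟩)

lemma posSemidef_linkCov (v : ∀ j : Σ l, d l, Fin (m j.1) → ℂ) (l : Fin L) :
    (linkCov v l).PosSemidef :=
  posSemidef_sum_rankOne _ _

lemma exists_eq_linkCov {S : ∀ k : Fin L, Matrix (Fin (m k)) (Fin (m k)) ℂ}
    (hS : ∀ k, (S k).PosSemidef) :
    ∃ (d : Fin L → ℕ) (v : ∀ j : Σ l, Fin (d l), Fin (m j.1) → ℂ), S = linkCov v := by
  choose d v hv using fun k => posSemidef_iff_eq_sum_vecMulVec.1 (hS k)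
  exact ⟨d, fun j => v j.1 j.2, funext hv⟩

lemma sum_trace_linkCov_mul (W : ∀ l : Fin L, Matrix (Fin (m l)) (Fin (m l)) ℂ)
    (v : ∀ j : Σ l, d l, Fin (m j.1) → ℂ) :
    ∑ l, (trace (linkCov v l * W l)).re = ∑ j, quadForm (W j.1) (v j) := by
  simp_rw [Fintype.sum_sigma, linkCov, Matrix.sum_mul, trace_sum, Complex.re_sum,
    ← re_trace_rankOne_mul, RCLike.re_eq_complex_re]

variable (v : ∀ j : Σ l, d l, Fin (m j.1) → ℂ)

lemma sinr_eq_quadForm_genOmega_inv {φ : (Σ l, d l) → (Σ l, d l) → ℝ} {l : Fin L} {i : d l}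
    {p : (Σ l, d l) → Prop} [DecidablePred p] (hp : ∀ k, p k → k.1 = l)
    (hφ : ∀ k, φ ⟨l, i⟩ k = Φ l k.1 + if p k then 1 else 0) :
    sinr φ (fun j k => H j.1 k.1) (fun j => Wn j.1) v ⟨l, i⟩ =
      quadForm (genOmega m n H Φ Wn (linkCov v) l +
        ∑ i with p ⟨l, i⟩, rankOne (H l l *ᵥ v ⟨l, i⟩))⁻¹ (H l l *ᵥ v ⟨l, i⟩) := by
  rw [sinr]
  congr 2
  simp_rw [streamCov, hφ, add_smul, Finset.sum_add_distrib, ite_smul, one_smul, zero_smul]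
  rw [sum_sigma_ite l hp, Fintype.sum_sigma, genOmega, add_assoc]
  simp_rw [linkCov, mul_sum_rankOne_mul_conjTranspose, Finset.smul_sum]

variable [∀ l, LinearOrder (d l)]

lemma genRate_linkCov (hΦ : ∀ l k, 0 ≤ Φ l k) (hWn : ∀ l, (Wn l).PosDef) (l : Fin L) :
    genRate m n H Φ Wn (linkCov v) l = ∑ i, Real.log (1 +
      sinr (sicCoupling Φ) (fun j k => H j.1 k.1) (fun j => Wn j.1) v ⟨l, i⟩) := by
  classical
  have hΩ := posDef_genOmega H hΦ hWn (posSemidef_linkCov v) l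
  have hlog := log_det_add_sum_rankOne_gt hΩ (fun i => H l l *ᵥ v ⟨l, i⟩) Finset.univ
  rw [genRate, linkCov, mul_sum_rankOne_mul_conjTranspose, ← RCLike.re_eq_complex_re, hlog]
  refine Finset.sum_congr rfl fun i _ => ?_
  rw [sinr_eq_quadForm_genOmega_inv (p := fun k => ⟨l, i⟩ < k) H v
    (fun k hk => (Sigma.lt_def.1 hk).1.symm) fun _ => rfl]
  simp only [Sigma.mk_lt_mk_iff]

lemma genRate_linkCov_flip (hΦ : ∀ l k, 0 ≤ Φ l k) (hWn : ∀ l, (Wn l).PosDef) (l : Fin L) :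
    genRate m n H Φ Wn (linkCov v) l = ∑ i, Real.log (1 +
      sinr (fun j k => sicCoupling (fun l k => Φ k l) k j) (fun j k => H j.1 k.1)
        (fun j => Wn j.1) v ⟨l, i⟩) := by
  classical
  have hΩ := posDef_genOmega H hΦ hWn (posSemidef_linkCov v) l
  have hlog := log_det_add_sum_rankOne_lt hΩ (fun i => H l l *ᵥ v ⟨l, i⟩) Finset.univ
  rw [genRate, linkCov, mul_sum_rankOne_mul_conjTranspose, ← RCLike.re_eq_complex_re, hlog]
  refine Finset.sum_congr rfl fun i _ => ?_
  rw [sinr_eq_quadForm_genOmega_inv (p := fun k => k < ⟨l, i⟩) H v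
    (fun k hk => (Sigma.lt_def.1 hk).1) fun _ => rfl]
  simp only [Sigma.mk_lt_mk_iff]

lemma genRegion_subset_dual (hΦ : ∀ l k, 0 ≤ Φ l k)
    {Wc : ∀ k : Fin L, Matrix (Fin (m k)) (Fin (m k)) ℂ} (hWc : ∀ k, (Wc k).PosDef)
    (hWn : ∀ l, (Wn l).PosDef) (PT : ℝ) :
    genRegion m n H Φ Wc Wn PT ⊆
      genRegion n m (fun l k => (H k l)ᴴ) (fun l k => Φ k l) Wn Wc PT := by
  rintro r ⟨hr, S, hS, hpow, hrate⟩
  obtain ⟨d, v, rfl⟩ := exists_eq_linkCov hS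
  have hφ := sicCoupling_nonneg (d := fun k => Fin (d k)) hΦ
  obtain ⟨w, hw_pow, hw_sinr⟩ := exists_dual_streams (fun j k => H j.1 k.1) v hφ
    (fun j => hWn j.1) (fun j => hWc j.1)
  refine ⟨hr, linkCov w, posSemidef_linkCov w, ?_, fun l => (hrate l).trans ?_⟩
  · rw [sum_trace_linkCov_mul] at hpow ⊢
    exact hw_pow.trans hpow
  · rw [genRate_linkCov H v hΦ hWn,
      genRate_linkCov_flip (fun l k => (H k l)ᴴ) w (fun l k => hΦ k l) hWc]
    refine Finset.sum_le_sum fun i _ => Real.log_le_log ?_ (add_le_add_right (hw_sinr ⟨l, i⟩) 1)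
    have := sinr_nonneg (fun j k => H j.1 k.1) v hφ (fun j => hWn j.1) ⟨l, i⟩
    positivity

end Network

theorem stmt8_general {L : ℕ} (m n : Fin L → ℕ)
    (H : ∀ l k : Fin L, Matrix (Fin (n l)) (Fin (m k)) ℂ)
    (Φ : Fin L → Fin L → ℝ) (hΦ : ∀ l k, 0 ≤ Φ l k)
    (Wc : ∀ k : Fin L, Matrix (Fin (m k)) (Fin (m k)) ℂ)
    (Wn : ∀ l : Fin L, Matrix (Fin (n l)) (Fin (n l)) ℂ)
    (hWc : ∀ k, (Wc k).PosDef) (hWn : ∀ l, (Wn l).PosDef) (PT : ℝ) :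
    genRegion m n H Φ Wc Wn PT
      = genRegion n m (fun l k => (H k l)ᴴ) (fun l k => Φ k l) Wn Wc PT := by
  refine (genRegion_subset_dual H hΦ hWc hWn PT).antisymm ?_
  simpa only [conjTranspose_conjTranspose] using
    genRegion_subset_dual (fun l k => (H k l)ᴴ) (fun l k => hΦ k l) hWn hWc PT

/-- Duality with a linear constraint and colored noise: the achievable rate
region equals that of the dual network. -/
theorem stmt8 {L : ℕ} (hL : 1 ≤ L) (m n : Fin L → ℕ)
    (H : ∀ l k : Fin L, Matrix (Fin (n l)) (Fin (m k)) ℂ)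
    (Φ : Fin L → Fin L → ℝ)
    (hΦ : ∀ l k, Φ l k = 0 ∨ Φ l k = 1) (hΦd : ∀ l, Φ l l = 0)
    (Wc : ∀ k : Fin L, Matrix (Fin (m k)) (Fin (m k)) ℂ)
    (Wn : ∀ l : Fin L, Matrix (Fin (n l)) (Fin (n l)) ℂ)
    (hWc : ∀ k, (Wc k).PosDef) (hWn : ∀ l, (Wn l).PosDef)
    (PT : ℝ) (hPT : 0 < PT) :
    genRegion m n H Φ Wc Wn PT
      = genRegion n m (fun l k => (H k l)ᴴ) (fun l k => Φ k l) Wn Wc PT := by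
  refine stmt8_general m n H Φ (fun l k => ?_) Wc Wn hWc hWn PT
  obtain h | h := hΦ l k <;> simp [h]
end
end

section
/- Let H_{1,2}, H_{2,2} ∈ ℂ^{m×m} be invertible with H_{2,2}^† H_{2,2} − H_{1,2}^† H_{1,2} positive semidefinite. Then the function g(Σ) = log det(I + H_{2,2} Σ H_{2,2}^†) − log det(I + H_{1,2} Σ H_{1,2}^†) is concave on the convex set of Hermitian positive semidefinite matrices Σ ∈ ℂ^{m×m}. -/
open Matrix ComplexOrder

noncomputable section

/-!
Write `BᴴB - AᴴA = RᴴR` and stack `A` over `R` to get `C`, so that `CᴴC = BᴴB`. By Sylvester's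
identity `det (1 + BSBᴴ) = det (1 + CSCᴴ)`, while `1 + ASAᴴ` is the upper left block of `1 + CSCᴴ`.
Hence the difference of the two log-determinants is the log-determinant of a Schur complement of
`1 + CSCᴴ`, which depends affinely on `S`. The Schur complement is concave in the Loewner order,
being the largest `D` such that subtracting `D` from the lower right block leaves a positive
semidefinite matrix; and `log det` is concave and monotone.
-/

section PosSemidef

open scoped MatrixOrder

variable {𝕜 n : Type*} [RCLike 𝕜]

theorem convex_setOf_posSemidef : Convex ℝ {M : Matrix n n 𝕜 | M.PosSemidef} :=
  fun _ hX _ hY _ _ ha hb _ => (hX.smul ha).add (hY.smul hb)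

theorem convex_setOf_posDef : Convex ℝ {M : Matrix n n 𝕜 | M.PosDef} :=
  convex_iff_forall_pos.mpr fun _ hX _ hY _ _ ha hb _ => (hX.smul ha).add (hY.smul hb)

variable [Fintype n]

theorem exists_eq_conjTranspose_mul_self_of_posSemidef {A : Matrix n n 𝕜} (hA : A.PosSemidef) :
    ∃ R : Matrix n n 𝕜, A = Rᴴ * R := by
  classical
  exact CStarAlgebra.nonneg_iff_eq_star_mul_self.mp hA.nonneg

theorem re_trace_mul_nonneg_of_posSemidef {A B : Matrix n n 𝕜} (hA : A.PosSemidef)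
    (hB : B.PosSemidef) : 0 ≤ RCLike.re (A * B).trace := by
  obtain ⟨R, rfl⟩ := exists_eq_conjTranspose_mul_self_of_posSemidef hA
  rw [← trace_mul_cycle]
  exact (RCLike.nonneg_iff.mp (hB.mul_mul_conjTranspose_same R).trace_nonneg).1

end PosSemidef

section LogDet

open scoped MatrixOrder

variable {𝕜 n : Type*} [RCLike 𝕜] [Fintype n] [DecidableEq n]

/-- The log-determinant of a positive definite matrix. The determinant is then a positive real;
for other matrices the value is meaningless. -/
def logDet (M : Matrix n n 𝕜) : ℝ :=
  Real.log (RCLike.re M.det)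

theorem re_det_pos_of_posDef {M : Matrix n n 𝕜} (hM : M.PosDef) : 0 < RCLike.re M.det :=
  (RCLike.pos_iff.mp hM.det_pos).1

theorem logDet_eq_add_of_det_eq_mul {l m : Type*} [Fintype l] [DecidableEq l] [Fintype m]
    [DecidableEq m] {L : Matrix l l 𝕜} {M : Matrix m m 𝕜} {N : Matrix n n 𝕜}
    (hM : M.PosDef) (hN : N.PosDef) (h : L.det = M.det * N.det) :
    logDet L = logDet M + logDet N := by
  have hre : RCLike.re L.det = RCLike.re M.det * RCLike.re N.det := by
    rw [h, RCLike.mul_re, (RCLike.pos_iff.mp hM.det_pos).2, zero_mul, sub_zero]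
  rw [logDet, hre, Real.log_mul (re_det_pos_of_posDef hM).ne' (re_det_pos_of_posDef hN).ne']
  rfl

theorem logDet_le_re_trace_sub_one {M : Matrix n n 𝕜} (hM : M.PosDef) :
    logDet M ≤ RCLike.re (M - 1).trace := by
  have hdet : RCLike.re M.det = ∏ i, hM.1.eigenvalues i := by
    rw [hM.1.det_eq_prod_eigenvalues, ← RCLike.ofReal_prod, RCLike.ofReal_re]
  have htr : RCLike.re (M - 1).trace = ∑ i, (hM.1.eigenvalues i - 1) := by
    rw [trace_sub, hM.1.trace_eq_sum_eigenvalues]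
    simp
  rw [logDet, hdet, htr, Real.log_prod fun i _ => (hM.eigenvalues_pos i).ne']
  exact Finset.sum_le_sum fun i _ => Real.log_le_sub_one_of_pos (hM.eigenvalues_pos i)

theorem logDet_le_logDet_add_re_trace {W X : Matrix n n 𝕜} (hW : W.PosDef) (hX : X.PosDef) :
    logDet X ≤ logDet W + RCLike.re (W⁻¹ * (X - W)).trace := by
  -- Congruence by a Gram factor `R` of `W⁻¹` moves the base point `W` of the tangent to `1`.
  have hWu : IsUnit W.det := (isUnit_iff_isUnit_det _).mp hW.isUnit
  obtain ⟨R, hR⟩ := exists_eq_conjTranspose_mul_self_of_posSemidef hW.inv.posSemidef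
  have hRu : IsUnit R := isUnit_of_mul_isUnit_right (hR ▸ hW.inv.isUnit)
  have hRX : (R * X * Rᴴ).PosDef := (IsUnit.posDef_star_right_conjugate_iff hRu).mpr hX
  have hdet : X.det = W.det * (R * X * Rᴴ).det := by
    calc X.det = (W * W⁻¹).det * X.det := by rw [mul_nonsing_inv _ hWu, det_one, one_mul]
      _ = W.det * (R * X * Rᴴ).det := by rw [hR]; simp only [det_mul]; ring
  have htr : (R * X * Rᴴ - 1).trace = (W⁻¹ * (X - W)).trace := by
    rw [mul_sub, nonsing_inv_mul _ hWu, trace_sub, trace_sub, hR, trace_mul_cycle R X Rᴴ]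
  rw [logDet_eq_add_of_det_eq_mul hW hRX hdet, ← htr]
  gcongr
  exact logDet_le_re_trace_sub_one hRX

theorem monotoneOn_logDet : MonotoneOn logDet {M : Matrix n n 𝕜 | M.PosDef} := by
  intro X hX W hW hXW
  have htangent := logDet_le_logDet_add_re_trace hW hX
  have htrace := re_trace_mul_nonneg_of_posSemidef hW.inv.posSemidef (le_iff.mp hXW)
  rw [← neg_sub W X, mul_neg, trace_neg, map_neg] at htangent
  linarith

theorem concaveOn_logDet : ConcaveOn ℝ {M : Matrix n n 𝕜 | M.PosDef} logDet := by
  refine ⟨convex_setOf_posDef, fun X hX Y hY a b ha hb hab => ?_⟩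
  set W := a • X + b • Y with hWdef
  have hW : W.PosDef := convex_setOf_posDef hX hY ha hb hab
  have hX' := mul_le_mul_of_nonneg_left (logDet_le_logDet_add_re_trace hW hX) ha
  have hY' := mul_le_mul_of_nonneg_left (logDet_le_logDet_add_re_trace hW hY) hb
  have hbalance : a * RCLike.re (W⁻¹ * (X - W)).trace
      + b * RCLike.re (W⁻¹ * (Y - W)).trace = 0 := by
    have hzero : a • (X - W) + b • (Y - W) = 0 := by
      rw [smul_sub, smul_sub, sub_add_sub_comm, ← add_smul, hab, one_smul, ← hWdef, sub_self]
    rw [← RCLike.smul_re, ← RCLike.smul_re, ← map_add, ← trace_smul, ← trace_smul, ← trace_add,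
      ← Matrix.mul_smul, ← Matrix.mul_smul, ← mul_add, hzero, mul_zero, trace_zero, map_zero]
  have hWsum : a * logDet W + b * logDet W = logDet W := by rw [← add_mul, hab, one_mul]
  simp only [smul_eq_mul]
  linarith

end LogDet

section SchurComplement

open scoped MatrixOrder

variable {𝕜 m n : Type*} [RCLike 𝕜]

theorem posDef_toBlocks₁₁ {M : Matrix (m ⊕ n) (m ⊕ n) 𝕜} (hM : M.PosDef) : M.toBlocks₁₁.PosDef :=
  hM.submatrix Sum.inl_injective

theorem toBlocks₂₁_eq_conjTranspose {α : Type*} [Star α] {M : Matrix (m ⊕ n) (m ⊕ n) α}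
    (hM : M.IsHermitian) : M.toBlocks₂₁ = M.toBlocks₁₂ᴴ :=
  Matrix.ext fun i j => (hM.apply (Sum.inr i) (Sum.inl j)).symm

variable [Fintype m] [DecidableEq m]

/-- The Schur complement of the upper left block of a block matrix. It is meaningful only when that
block is invertible. -/
def schurComplement {α : Type*} [CommRing α] (M : Matrix (m ⊕ n) (m ⊕ n) α) : Matrix n n α :=
  M.toBlocks₂₂ - M.toBlocks₂₁ * M.toBlocks₁₁⁻¹ * M.toBlocks₁₂

theorem det_eq_det_toBlocks₁₁_mul_det_schurComplement {α : Type*} [CommRing α] [Fintype n]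
    [DecidableEq n] {M : Matrix (m ⊕ n) (m ⊕ n) α} (hM : IsUnit M.toBlocks₁₁) :
    M.det = M.toBlocks₁₁.det * (schurComplement M).det := by
  let _ := hM.invertible
  conv_lhs => rw [← fromBlocks_toBlocks M, det_fromBlocks₁₁, invOf_eq_nonsing_inv]
  rfl

theorem fromBlocks_zero_le_iff_le_schurComplement [Finite n]
    {M : Matrix (m ⊕ n) (m ⊕ n) 𝕜} {D : Matrix n n 𝕜} (hM : M.IsHermitian)
    (hM₁₁ : M.toBlocks₁₁.PosDef) : fromBlocks 0 0 0 D ≤ M ↔ D ≤ schurComplement M := by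
  let _ := hM₁₁.isUnit.invertible
  have hblocks : M - fromBlocks 0 0 0 D =
      fromBlocks M.toBlocks₁₁ M.toBlocks₁₂ M.toBlocks₁₂ᴴ (M.toBlocks₂₂ - D) := by
    conv_lhs => rw [← fromBlocks_toBlocks M, toBlocks₂₁_eq_conjTranspose hM]
    simp [sub_eq_add_neg, fromBlocks_neg, fromBlocks_add]
  rw [le_iff, le_iff, hblocks, hM₁₁.fromBlocks₁₁, schurComplement,
    toBlocks₂₁_eq_conjTranspose hM, sub_right_comm]

theorem posDef_schurComplement [Finite n] {M : Matrix (m ⊕ n) (m ⊕ n) 𝕜} (hM : M.PosDef) :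
    (schurComplement M).PosDef := by
  classical
  have := Fintype.ofFinite n
  have hM₁₁ := posDef_toBlocks₁₁ hM
  have hnonneg : 0 ≤ schurComplement M := by
    rw [← fromBlocks_zero_le_iff_le_schurComplement hM.1 hM₁₁, fromBlocks_zero]
    exact hM.posSemidef.nonneg
  refine (nonneg_iff_posSemidef.mp hnonneg).posDef_iff_det_ne_zero.mpr ?_
  have hdet := hM.det_pos.ne'
  rw [det_eq_det_toBlocks₁₁_mul_det_schurComplement hM₁₁.isUnit] at hdet
  exact right_ne_zero_of_mul hdet

theorem concaveOn_schurComplement [Finite n] :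
    ConcaveOn ℝ {M : Matrix (m ⊕ n) (m ⊕ n) 𝕜 | M.PosDef} schurComplement := by
  refine ⟨convex_setOf_posDef, fun X hX Y hY a b ha hb hab => ?_⟩
  have hsub {M : Matrix (m ⊕ n) (m ⊕ n) 𝕜} (hM : M.PosDef) :
      (M - fromBlocks 0 0 0 (schurComplement M)).PosSemidef :=
    (fromBlocks_zero_le_iff_le_schurComplement hM.1 (posDef_toBlocks₁₁ hM)).mpr le_rfl
  have hXY := convex_setOf_posDef hX hY ha hb hab
  rw [← fromBlocks_zero_le_iff_le_schurComplement hXY.1 (posDef_toBlocks₁₁ hXY), le_iff]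
  convert ((hsub hX).smul ha).add ((hsub hY).smul hb) using 1
  rw [smul_sub, smul_sub, sub_add_sub_comm, fromBlocks_smul, fromBlocks_smul, fromBlocks_add]
  simp only [smul_zero, add_zero]

variable [Fintype n] [DecidableEq n]

theorem logDet_schurComplement {M : Matrix (m ⊕ n) (m ⊕ n) 𝕜} (hM : M.PosDef) :
    logDet (schurComplement M) = logDet M - logDet M.toBlocks₁₁ :=
  have hM₁₁ := posDef_toBlocks₁₁ hM
  eq_sub_of_add_eq' (logDet_eq_add_of_det_eq_mul hM₁₁ (posDef_schurComplement hM)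
    (det_eq_det_toBlocks₁₁_mul_det_schurComplement hM₁₁.isUnit)).symm

theorem concaveOn_logDet_sub_logDet_toBlocks₁₁ :
    ConcaveOn ℝ {M : Matrix (m ⊕ n) (m ⊕ n) 𝕜 | M.PosDef}
      fun M => logDet M - logDet M.toBlocks₁₁ := by
  suffices h : ConcaveOn ℝ {M : Matrix (m ⊕ n) (m ⊕ n) 𝕜 | M.PosDef}
      (logDet ∘ schurComplement) from h.congr fun _ hM => logDet_schurComplement hM
  refine ⟨convex_setOf_posDef, fun X hX Y hY a b ha hb hab => ?_⟩
  have hX' := posDef_schurComplement hX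
  have hY' := posDef_schurComplement hY
  have hXY := convex_setOf_posDef hX hY ha hb hab
  calc a • logDet (schurComplement X) + b • logDet (schurComplement Y)
      ≤ logDet (a • schurComplement X + b • schurComplement Y) :=
        concaveOn_logDet.2 hX' hY' ha hb hab
    _ ≤ logDet (schurComplement (a • X + b • Y)) :=
        monotoneOn_logDet (convex_setOf_posDef hX' hY' ha hb hab) (posDef_schurComplement hXY)
          (concaveOn_schurComplement.2 hX hY ha hb hab)

end SchurComplement

section OneAddCongruence

variable {𝕜 α m n p : Type*} [RCLike 𝕜] [CommRing α] [StarRing α] [Fintype p] [DecidableEq n]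

theorem posDef_one_add_mul_mul_conjTranspose_s12 [Finite n] {S : Matrix p p 𝕜}
    (hS : S.PosSemidef) (C : Matrix n p 𝕜) : (1 + C * S * Cᴴ).PosDef :=
  PosDef.one.add_posSemidef (hS.mul_mul_conjTranspose_same C)

theorem concaveOn_comp_one_add_mul_mul_conjTranspose [Finite n] {f : Matrix n n 𝕜 → ℝ}
    (hf : ConcaveOn ℝ {M : Matrix n n 𝕜 | M.PosDef} f) (C : Matrix n p 𝕜) :
    ConcaveOn ℝ {S : Matrix p p 𝕜 | S.PosSemidef} fun S => f (1 + C * S * Cᴴ) := by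
  refine ⟨convex_setOf_posSemidef, fun S hS Z hZ a b ha hb hab => ?_⟩
  have haffine : 1 + C * (a • S + b • Z) * Cᴴ =
      a • (1 + C * S * Cᴴ) + b • (1 + C * Z * Cᴴ) := by
    rw [smul_add, smul_add, add_add_add_comm, ← add_smul, hab, one_smul]
    simp only [Matrix.mul_add, Matrix.add_mul, Matrix.mul_smul, Matrix.smul_mul]
  simpa only [haffine] using hf.2 (posDef_one_add_mul_mul_conjTranspose_s12 hS C)
    (posDef_one_add_mul_mul_conjTranspose_s12 hZ C) ha hb hab

variable [DecidableEq m]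

theorem det_one_add_mul_mul_conjTranspose_congr [Fintype m] [Fintype n] {B : Matrix m p α}
    {C : Matrix n p α} (h : Bᴴ * B = Cᴴ * C) (S : Matrix p p α) :
    (1 + B * S * Bᴴ).det = (1 + C * S * Cᴴ).det := by
  classical
  rw [Matrix.mul_assoc B, det_one_add_mul_comm, Matrix.mul_assoc S, h, ← Matrix.mul_assoc,
    det_one_add_mul_comm, ← Matrix.mul_assoc]

theorem toBlocks₁₁_one_add_fromRows_mul_mul_conjTranspose (A : Matrix m p α) (R : Matrix n p α)
    (S : Matrix p p α) :
    (1 + fromRows A R * S * (fromRows A R)ᴴ).toBlocks₁₁ = 1 + A * S * Aᴴ := by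
  rw [fromRows_mul, conjTranspose_fromRows_eq_fromCols_conjTranspose, fromRows_mul_fromCols,
    ← fromBlocks_one, fromBlocks_add, toBlocks_fromBlocks₁₁]

end OneAddCongruence

theorem stmt12_general {𝕜 m n p : Type*} [RCLike 𝕜] [Fintype m] [Fintype n] [Fintype p]
    [DecidableEq m] [DecidableEq n] {A : Matrix m p 𝕜} {B : Matrix n p 𝕜}
    (hAB : (Bᴴ * B - Aᴴ * A).PosSemidef) :
    ConcaveOn ℝ {S : Matrix p p 𝕜 | S.PosSemidef}
      fun S => logDet (1 + B * S * Bᴴ) - logDet (1 + A * S * Aᴴ) := by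
  classical
  obtain ⟨R, hR⟩ := exists_eq_conjTranspose_mul_self_of_posSemidef hAB
  have hgram : Bᴴ * B = (fromRows A R)ᴴ * fromRows A R := by
    rw [conjTranspose_fromRows_eq_fromCols_conjTranspose, fromCols_mul_fromRows, ← hR,
      add_sub_cancel]
  refine (concaveOn_comp_one_add_mul_mul_conjTranspose
    concaveOn_logDet_sub_logDet_toBlocks₁₁ (fromRows A R)).congr fun S _ => ?_
  simp only [logDet, toBlocks₁₁_one_add_fromRows_mul_mul_conjTranspose,
    det_one_add_mul_mul_conjTranspose_congr hgram]

/-- `g(Σ) = log det(I + H₂₂ΣH₂₂ᴴ) − log det(I + H₁₂ΣH₁₂ᴴ)` is concave on the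
set of Hermitian positive semidefinite matrices when `H₁₂, H₂₂` are invertible
and `H₂₂ᴴH₂₂ − H₁₂ᴴH₁₂` is positive semidefinite. -/
theorem stmt12 {m : ℕ}
    (H12 H22 : Matrix (Fin m) (Fin m) ℂ)
    (hH12 : IsUnit H12) (hH22 : IsUnit H22)
    (hdom : (H22ᴴ * H22 - H12ᴴ * H12).PosSemidef)
    (g : Matrix (Fin m) (Fin m) ℂ → ℝ)
    (hg : ∀ S, g S = Real.log ((1 + H22 * S * H22ᴴ).det.re)
        - Real.log ((1 + H12 * S * H12ᴴ).det.re)) :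
    ∀ (S Z : Matrix (Fin m) (Fin m) ℂ), S.PosSemidef → Z.PosSemidef →
      ∀ t : ℝ, 0 ≤ t → t ≤ 1 →
        t * g S + (1 - t) * g Z ≤ g (t • S + (1 - t) • Z) := by
  obtain rfl := funext hg
  exact fun S Z hS hZ t ht0 ht1 =>
    (stmt12_general hdom).2 hS hZ ht0 (sub_nonneg.mpr ht1) (add_sub_cancel t 1)
end
end

section
/- Let A, B ∈ ℂ^{n×n} be Hermitian with B positive definite and A − B positive semidefinite, and let Y ∈ ℂ^{n×n} be Hermitian. Then Tr(AYAY) and Tr(BYBY) are real numbers and Tr(AYAY) ≥ Tr(BYBY). -/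
open Matrix ComplexOrder

noncomputable section

/-!
Conjugation by `Y` preserves positive semidefiniteness, so `-A ≤ B ≤ A` in the Loewner order gives
`-YAYᴴ ≤ YBYᴴ ≤ YAYᴴ`. The polarization identity
`2 (Tr AC - Tr BD) = Tr ((A - B)(C + D)) + Tr ((A + B)(C - D))` with `C = YAYᴴ`, `D = YBYᴴ` then
writes the difference of the two traces as a sum of traces of products of positive semidefinite
matrices.
-/

section

variable {m R 𝕜 : Type*}

theorem isHermitian_and_isHermitian_of_sub_of_add [CommRing R] [StarRing R] [Invertible (2 : R)]
    {A B : Matrix m m R} (hsub : (A - B).IsHermitian) (hadd : (A + B).IsHermitian) :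
    A.IsHermitian ∧ B.IsHermitian := by
  have hA : A.IsHermitian := by
    refine .of_smul (k := (2 : R)) ?_ (.ofNat 2)
    simpa only [two_smul, sub_add_add_cancel] using hsub.add hadd
  exact ⟨hA, by simpa only [add_sub_cancel_left] using hadd.sub hA⟩

variable [Fintype m]

theorem isSelfAdjoint_trace_mul [CommSemiring R] [StarRing R] {A B : Matrix m m R}
    (hA : A.IsHermitian) (hB : B.IsHermitian) : IsSelfAdjoint (A * B).trace := by
  rw [IsSelfAdjoint, ← trace_conjTranspose, conjTranspose_mul, hA.eq, hB.eq, trace_mul_comm]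

theorem isSelfAdjoint_trace_mul_mul_mul_conjTranspose [CommSemiring R] [StarRing R]
    {A : Matrix m m R} (hA : A.IsHermitian) (Y : Matrix m m R) :
    IsSelfAdjoint (A * Y * A * Yᴴ).trace := by
  simpa only [Matrix.mul_assoc] using
    isSelfAdjoint_trace_mul hA (isHermitian_mul_mul_conjTranspose Y hA)

variable [RCLike 𝕜] {A B C D : Matrix m m 𝕜}

theorem trace_mul_nonneg (hA : A.PosSemidef) (hB : B.PosSemidef) : 0 ≤ (A * B).trace := by
  classical
  open scoped MatrixOrder in
  obtain ⟨S, rfl⟩ := CStarAlgebra.nonneg_iff_eq_star_mul_self.mp hA.nonneg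
  rw [star_eq_conjTranspose, Matrix.mul_assoc, trace_mul_comm]
  exact (hB.mul_mul_conjTranspose_same S).trace_nonneg

theorem trace_mul_le_trace_mul (hAB : (A - B).PosSemidef) (hAB' : (A + B).PosSemidef)
    (hCD : (C - D).PosSemidef) (hCD' : (C + D).PosSemidef) :
    (B * D).trace ≤ (A * C).trace := by
  have polarization : 2 * (A * C).trace - 2 * (B * D).trace =
      ((A - B) * (C + D)).trace + ((A + B) * (C - D)).trace := by
    simp only [Matrix.sub_mul, Matrix.add_mul, Matrix.mul_add, Matrix.mul_sub, trace_add, trace_sub]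
    ring
  have two_mul_le : 2 * (B * D).trace ≤ 2 * (A * C).trace := by
    rw [← sub_nonneg, polarization]
    exact add_nonneg (trace_mul_nonneg hAB hCD') (trace_mul_nonneg hAB' hCD)
  exact le_of_mul_le_mul_left two_mul_le two_pos

theorem trace_mul_mul_mul_conjTranspose_le (hsub : (A - B).PosSemidef) (hadd : (A + B).PosSemidef)
    (Y : Matrix m m 𝕜) : (B * Y * B * Yᴴ).trace ≤ (A * Y * A * Yᴴ).trace := by
  have hsubY : (Y * A * Yᴴ - Y * B * Yᴴ).PosSemidef := by
    simpa only [Matrix.mul_sub, Matrix.sub_mul] using hsub.mul_mul_conjTranspose_same Y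
  have haddY : (Y * A * Yᴴ + Y * B * Yᴴ).PosSemidef := by
    simpa only [Matrix.mul_add, Matrix.add_mul] using hadd.mul_mul_conjTranspose_same Y
  simpa only [Matrix.mul_assoc] using trace_mul_le_trace_mul hsub hadd hsubY haddY

theorem stmt13_general (hsub : (A - B).PosSemidef) (hadd : (A + B).PosSemidef)
    (Y : Matrix m m 𝕜) :
    RCLike.im (A * Y * A * Yᴴ).trace = 0 ∧
    RCLike.im (B * Y * B * Yᴴ).trace = 0 ∧
    RCLike.re (B * Y * B * Yᴴ).trace ≤ RCLike.re (A * Y * A * Yᴴ).trace := by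
  have : Invertible (2 : 𝕜) := invertibleOfNonzero two_ne_zero
  obtain ⟨hA, hB⟩ :=
    isHermitian_and_isHermitian_of_sub_of_add hsub.isHermitian hadd.isHermitian
  exact ⟨RCLike.im_eq_zero_iff_isSelfAdjoint.mpr
      (isSelfAdjoint_trace_mul_mul_mul_conjTranspose hA Y),
    RCLike.im_eq_zero_iff_isSelfAdjoint.mpr (isSelfAdjoint_trace_mul_mul_mul_conjTranspose hB Y),
    (RCLike.le_iff_re_im.mp (trace_mul_mul_mul_conjTranspose_le hsub hadd Y)).1⟩

end

/-- For Hermitian `A`, positive definite `B` with `A − B` positive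
semidefinite, and Hermitian `Y`, the traces `Tr(AYAY)` and `Tr(BYBY)` are real
and `Tr(AYAY) ≥ Tr(BYBY)`. -/
theorem stmt13 {n : ℕ} (A B Y : Matrix (Fin n) (Fin n) ℂ)
    (hA : A.IsHermitian) (hB : B.PosDef) (hAB : (A - B).PosSemidef)
    (hY : Y.IsHermitian) :
    (Matrix.trace (A * Y * A * Y)).im = 0 ∧
    (Matrix.trace (B * Y * B * Y)).im = 0 ∧
    (Matrix.trace (B * Y * B * Y)).re ≤ (Matrix.trace (A * Y * A * Y)).re := by
  have hadd : (A + B).PosSemidef := by simpa using hAB.add (hB.add hB).posSemidef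
  simpa only [hY.eq, RCLike.im_to_complex, RCLike.re_to_complex] using stmt13_general hAB hadd Y
end
end
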